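/- arXiv:2112.02436 — 2 statements merged into one kernel-verified Lean document; each statement's English description precedes it below -/
import Mathlib

section
/- Suppose X ⊆ [n]^D has at least a·(1 + 3n/D)·N_{n,D} + b elements, where N_{n,D} is the size of the largest level set of [n]^D. Then X contains at least (b/(a!·n^a))·D^a pairs (x, y) with x ≼ y and r(y) − r(x) ≥ a. -/
open Classical

/-- The rank of `x ∈ {0,...,n-1}^D`: the sum of its coordinates. -/
def rank {n D : ℕ} (x : Fin D → Fin n) : ℕ := ∑ t, (x t : ℕ)

/-- `N_{n,D}`: the size of the middle layer `{x ∈ [n]^D : r(x) = ⌊(n-1)D/2⌋}`. -/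
noncomputable def middleLayerCard (n D : ℕ) : ℕ :=
  (Finset.univ.filter (fun x : Fin D → Fin n => rank x = (n - 1) * D / 2)).card

open Finset
open scoped Matrix

/-!
A nonnegative matrix `W` with row and column sums at most `1`, supported on steps up by one rank, is
a flow of random chains of total weight `chainMass W` that visits every point with weight `1`.
If `S j x` bounds the expected number of visits to `X`, at least `j` ranks above `x`, of a chain
through `x`, then `U j = min 1 (S j)` decreases in `j` and `W (U j) ≤ U (j + 1)`.
Since `∑ x, (U x - (W U) x)` is at most `chainMass W` for every `U ≤ 1`, telescoping shows that
`#X - a * chainMass W` is at most `∑ x ∈ X, S a x`, to which a pair of points of `X` contributes at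
most the weight with which chains pass from the one to the other. When few, light steps out of a
point stay below any given point, that weight is small: at most `a! (n / D) ^ a` in `[n]^D`.

In the grid `[p + 1]^D`, give a step raising a coordinate from `k` to `k + 1` the weight
`(k + 1) (p - k)`, and divide each entry by the larger of its row sum and its column sum. The
commutation relation of `sl₂` shows that the weight up from a point minus the weight down from it is
`p D` minus twice the rank. So the row sums below the middle and the column sums above it are
exactly `1` except within `p / 2` of the middle rank, where they fall short by at most `2 / D`. This
puts `chainMass` within a factor `1 + 2 n / D` of the size of the middle layer.
-/

section Substochastic

variable {α : Type*} [Fintype α]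

/-- A nonnegative matrix all of whose row sums and column sums are at most `1`. It is read as the
transition weights of random chains which visit every point with total weight `1`. -/
structure IsDoublySubstochastic (W : Matrix α α ℝ) : Prop where
  nonneg : ∀ x y, 0 ≤ W x y
  row_sum_le_one : ∀ x, ∑ y, W x y ≤ 1
  col_sum_le_one : ∀ y, ∑ x, W x y ≤ 1

/-- The total weight of the random chains with transition weights `W`: a point `y` is the start of
the part of its weight `1` that does not arrive from elsewhere. -/
def chainMass (W : Matrix α α ℝ) : ℝ := ∑ y, (1 - ∑ x, W x y)

namespace IsDoublySubstochastic

variable {W : Matrix α α ℝ}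

theorem mulVec_mono (hW : IsDoublySubstochastic W) {u v : α → ℝ} (huv : u ≤ v) :
    W *ᵥ u ≤ W *ᵥ v := fun x ↦
  sum_le_sum fun z _ ↦ mul_le_mul_of_nonneg_left (huv z) (hW.nonneg x z)

theorem mulVec_le_one (hW : IsDoublySubstochastic W) {u : α → ℝ} (hu : u ≤ 1) : W *ᵥ u ≤ 1 :=
  (hW.mulVec_mono hu).trans fun x ↦ by
    simpa [Matrix.mulVec, dotProduct] using hW.row_sum_le_one x

theorem sum_sub_mulVec_le_chainMass (hW : IsDoublySubstochastic W) {u : α → ℝ} (hu : u ≤ 1) :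
    ∑ x, (u x - (W *ᵥ u) x) ≤ chainMass W := by
  have hswap : ∑ x, (W *ᵥ u) x = ∑ y, (∑ x, W x y) * u y := by
    simp only [Matrix.mulVec, dotProduct, sum_mul]
    exact sum_comm
  calc ∑ x, (u x - (W *ᵥ u) x) = ∑ y, (1 - ∑ x, W x y) * u y := by
        rw [sum_sub_distrib, hswap, ← sum_sub_distrib]
        exact sum_congr rfl fun y _ ↦ by ring
    _ ≤ chainMass W := sum_le_sum fun y _ ↦
        mul_le_of_le_one_right (sub_nonneg.2 (hW.col_sum_le_one y)) (hu y)

theorem card_sub_mul_chainMass_le_sum (hW : IsDoublySubstochastic W) (X : Finset α)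
    {S : ℕ → α → ℝ} (hanti : ∀ j, S (j + 1) ≤ S j) (hstep : ∀ j, W *ᵥ S j ≤ S (j + 1))
    (hS : ∀ x ∈ X, 1 ≤ S 0 x) (a : ℕ) :
    (#X : ℝ) - a * chainMass W ≤ ∑ x ∈ X, S a x := by
  let U : ℕ → α → ℝ := fun j ↦ 1 ⊓ S j
  have hU_anti : ∀ j, U (j + 1) ≤ U j := fun j ↦ inf_le_inf_left 1 (hanti j)
  have hU_step : ∀ j, W *ᵥ U j ≤ U (j + 1) := fun j ↦
    le_inf (hW.mulVec_le_one inf_le_left) ((hW.mulVec_mono inf_le_right).trans (hstep j))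
  have hdrop : ∀ j, ∑ x ∈ X, (U j x - U (j + 1) x) ≤ chainMass W := fun j ↦
    calc ∑ x ∈ X, (U j x - U (j + 1) x) ≤ ∑ x, (U j x - U (j + 1) x) :=
          sum_le_univ_sum_of_nonneg fun x ↦ sub_nonneg.2 (hU_anti j x)
      _ ≤ ∑ x, (U j x - (W *ᵥ U j) x) := sum_le_sum fun x _ ↦ sub_le_sub_left (hU_step j x) _
      _ ≤ chainMass W := hW.sum_sub_mulVec_le_chainMass inf_le_left
  have hU_zero : ∑ x ∈ X, U 0 x = #X := by
    rw [card_eq_sum_ones, Nat.cast_sum, Nat.cast_one]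
    exact sum_congr rfl fun x hx ↦ inf_eq_left.2 (hS x hx)
  have htelescope : ∑ x ∈ X, (U 0 x - U a x) ≤ a * chainMass W := by
    calc ∑ x ∈ X, (U 0 x - U a x) = ∑ j ∈ range a, ∑ x ∈ X, (U j x - U (j + 1) x) := by
          rw [sum_comm]
          exact sum_congr rfl fun x _ ↦ (sum_range_sub' (fun j ↦ U j x) a).symm
      _ ≤ a * chainMass W := by
          simpa using sum_le_card_nsmul (range a) _ _ fun j _ ↦ hdrop j
  have hU_le : ∑ x ∈ X, U a x ≤ ∑ x ∈ X, S a x := sum_le_sum fun x _ ↦ inf_le_right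
  rw [sum_sub_distrib, hU_zero] at htelescope
  linarith

end IsDoublySubstochastic

end Substochastic

section Graded

variable {α : Type*} [Fintype α] {r : α → ℕ} {W : Matrix α α ℝ}

theorem chainMass_le_card_level_add_sum (hr : ∀ x y, W x y ≠ 0 → r y = r x + 1) (m : ℕ)
    {ℓ : α → ℝ} (hℓ : ∀ x, 0 ≤ ℓ x) (hrow : ∀ x, r x < m → 1 - ℓ x ≤ ∑ y, W x y)
    (hcol : ∀ y, m < r y → 1 - ℓ y ≤ ∑ x, W x y) :
    chainMass W ≤ #{x | r x = m} + ∑ x, ℓ x := by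
  have hflow : ∑ y, ∑ x, W x y =
      ∑ x, ((if r x < m then ∑ y, W x y else 0) + if m < r x then ∑ y, W y x else 0) := by
    have hlow : ∑ x, (if r x < m then ∑ y, W x y else 0) =
        ∑ y, ∑ x, if r x < m then W x y else 0 := by
      rw [sum_comm]
      exact sum_congr rfl fun x _ ↦ by split_ifs <;> simp
    rw [sum_add_distrib, hlow, ← sum_add_distrib]
    refine sum_congr rfl fun y _ ↦ ?_
    by_cases hy : m < r y
    · rw [if_pos hy, right_eq_add]
      refine sum_eq_zero fun x _ ↦ ite_eq_right_iff.2 fun hx ↦ ?_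
      by_contra hxy
      have := hr x y hxy
      omega
    · rw [if_neg hy, add_zero]
      refine sum_congr rfl fun x _ ↦ (ite_eq_left_iff.2 fun hx ↦ ?_).symm
      by_contra hxy
      have := hr x y (Ne.symm hxy)
      omega
  have hlevel : (#{x | r x = m} : ℝ) = ∑ x, if r x = m then (1 : ℝ) else 0 := by
    rw [sum_boole]
  rw [chainMass, sum_sub_distrib, hflow, ← sum_sub_distrib, hlevel, ← sum_add_distrib]
  refine sum_le_sum fun x _ ↦ ?_
  rcases lt_trichotomy (r x) m with h | h | h
  · rw [if_pos h, if_neg h.ne, if_neg h.not_gt]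
    linarith [hrow x h]
  · rw [if_neg h.not_lt, if_neg h.not_gt, if_pos h]
    linarith [hℓ x]
  · rw [if_neg h.not_gt, if_pos h, if_neg h.ne']
    linarith [hcol x h]

/-- An upper bound for the weight with which a chain passes from a point to a given point `d` ranks
above it, when the weight of the steps staying below a point `i + 1` ranks above is at most
`q * (i + 1)`. -/
noncomputable def reachBound (q : ℝ) (d : ℕ) : ℝ := ∏ i ∈ range d, min 1 (q * (i + 1))

theorem reachBound_nonneg {q : ℝ} (hq : 0 ≤ q) (d : ℕ) : 0 ≤ reachBound q d :=
  prod_nonneg fun _ _ ↦ by positivity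

theorem reachBound_le {q : ℝ} (hq : 0 ≤ q) {a d : ℕ} (had : a ≤ d) :
    reachBound q d ≤ a.factorial * q ^ a := by
  have hnonneg (i : ℕ) : 0 ≤ min 1 (q * (i + 1)) := by positivity
  calc reachBound q d
      = reachBound q a * ∏ i ∈ Ico a d, min 1 (q * (i + 1)) :=
        (prod_range_mul_prod_Ico _ had).symm
    _ ≤ reachBound q a := mul_le_of_le_one_right (reachBound_nonneg hq a)
        (prod_le_one (fun i _ ↦ hnonneg i) fun i _ ↦ min_le_left _ _)
    _ ≤ ∏ i ∈ range a, q * (i + 1) :=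
        prod_le_prod (fun i _ ↦ hnonneg i) fun i _ ↦ min_le_right _ _
    _ = a.factorial * q ^ a := by
        rw [prod_mul_distrib, prod_const, card_range, mul_comm, ← prod_range_add_one_eq_factorial]
        push_cast
        rfl

/-- The pairs `x ≤ y` of points of `X` whose ranks differ by at least `a`. -/
noncomputable def farPairs [LE α] (r : α → ℕ) (X : Finset α) (a : ℕ) : Finset (α × α) :=
  {p ∈ X ×ˢ X | p.1 ≤ p.2 ∧ r p.1 + a ≤ r p.2}

/-- An upper bound for the expected number of visits to `X`, at least `j` ranks above `x`, of a
chain through `x`. -/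
noncomputable def visitBound [LE α] (r : α → ℕ) (q : ℝ) (X : Finset α) (j : ℕ) (x : α) : ℝ :=
  ∑ y ∈ X, if x ≤ y ∧ r x + j ≤ r y then reachBound q (r y - r x) else 0

theorem mulVec_visitBound_le [Preorder α] {q : ℝ} (hq : 0 ≤ q) (hW : IsDoublySubstochastic W)
    (hr : ∀ x y, W x y ≠ 0 → r y = r x + 1) (hle : ∀ x y, W x y ≠ 0 → x ≤ y)
    (hlocal : ∀ x y, x ≤ y → ∑ z with z ≤ y, W x z ≤ q * (r y - r x))
    (X : Finset α) (j : ℕ) :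
    W *ᵥ visitBound r q X j ≤ visitBound r q X (j + 1) := by
  intro x
  simp only [Matrix.mulVec, dotProduct, visitBound, mul_sum]
  rw [sum_comm]
  refine sum_le_sum fun y _ ↦ ?_
  split_ifs with hxy
  · obtain ⟨hxy, hrank⟩ := hxy
    obtain ⟨d, hd⟩ : ∃ d, r y = r x + d + 1 := ⟨r y - r x - 1, by omega⟩
    have hterm : ∀ z, (W x z * if z ≤ y ∧ r z + j ≤ r y then reachBound q (r y - r z) else 0) =
        if z ≤ y then W x z * reachBound q d else 0 := fun z ↦ by
      by_cases hz : W x z = 0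
      · simp [hz]
      · have := hr x z hz
        have hnear : r z + j ≤ r y := by omega
        simp only [show r y - r z = d by omega, hnear, and_true, mul_ite, mul_zero]
    have hone : ∑ z with z ≤ y, W x z ≤ 1 :=
      (sum_le_univ_sum_of_nonneg (hW.nonneg x)).trans (hW.row_sum_le_one x)
    have hfew : ∑ z with z ≤ y, W x z ≤ q * (d + 1) :=
      (hlocal x y hxy).trans_eq (by rw [hd]; push_cast; ring)
    calc _ = (∑ z with z ≤ y, W x z) * reachBound q d := by
          simp only [hterm, ← sum_filter, sum_mul]
      _ ≤ min 1 (q * (d + 1)) * reachBound q d :=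
          mul_le_mul_of_nonneg_right (le_min hone hfew) (reachBound_nonneg hq d)
      _ = reachBound q (r y - r x) := by
          rw [show r y - r x = d + 1 by omega, reachBound, reachBound, prod_range_succ, mul_comm]
  · refine sum_nonpos fun z _ ↦ ?_
    by_cases hz : W x z = 0
    · simp [hz]
    · have := hr x z hz
      have hfar : ¬(z ≤ y ∧ r z + j ≤ r y) := fun h ↦ hxy ⟨(hle x z hz).trans h.1, by omega⟩
      rw [if_neg hfar, mul_zero]

theorem card_sub_mul_chainMass_le_card_farPairs_mul [Preorder α] {q : ℝ} (hq : 0 ≤ q)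
    (hW : IsDoublySubstochastic W) (hr : ∀ x y, W x y ≠ 0 → r y = r x + 1)
    (hle : ∀ x y, W x y ≠ 0 → x ≤ y)
    (hlocal : ∀ x y, x ≤ y → ∑ z with z ≤ y, W x z ≤ q * (r y - r x))
    (X : Finset α) (a : ℕ) :
    (#X : ℝ) - a * chainMass W ≤ #(farPairs r X a) * (a.factorial * q ^ a) := by
  have hterm_nonneg (j : ℕ) (x y : α) :
      0 ≤ if x ≤ y ∧ r x + j ≤ r y then reachBound q (r y - r x) else 0 :=
    ite_nonneg (reachBound_nonneg hq _) le_rfl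
  have hanti : ∀ j, visitBound r q X (j + 1) ≤ visitBound r q X j := fun j x ↦
    sum_le_sum fun y _ ↦ by
      split_ifs with hfar hnear
      · exact le_rfl
      · exact absurd ⟨hfar.1, by omega⟩ hnear
      · exact reachBound_nonneg hq _
      · exact le_rfl
  have hself : ∀ x ∈ X, 1 ≤ visitBound r q X 0 x := fun x hx ↦ by
    simpa [visitBound, reachBound] using single_le_sum (fun y _ ↦ hterm_nonneg 0 x y) hx
  calc (#X : ℝ) - a * chainMass W ≤ ∑ x ∈ X, visitBound r q X a x :=
        hW.card_sub_mul_chainMass_le_sum X hanti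
          (mulVec_visitBound_le hq hW hr hle hlocal X) hself a
    _ = ∑ p ∈ farPairs r X a, reachBound q (r p.2 - r p.1) := by
        simp only [visitBound, farPairs, ← sum_product', sum_filter]
    _ ≤ #(farPairs r X a) • (a.factorial * q ^ a) :=
        sum_le_card_nsmul _ _ _ fun p hp ↦
          reachBound_le hq (by have := (mem_filter.1 hp).2.2; omega)
    _ = _ := nsmul_eq_mul _ _

end Graded

section MaxNormalize

variable {α β : Type*} [Fintype α] [Fintype β] {M : Matrix α β ℝ}

/-- The matrix `M` with each entry divided by the larger of its row sum and its column sum. -/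
noncomputable def maxNormalize (M : Matrix α β ℝ) : Matrix α β ℝ :=
  Matrix.of fun x y ↦ M x y / max (∑ z, M x z) (∑ z, M z y)

theorem maxNormalize_transpose (M : Matrix α β ℝ) : maxNormalize Mᵀ = (maxNormalize M)ᵀ := by
  ext y x
  simp [maxNormalize, max_comm]

theorem maxNormalize_nonneg (hM : ∀ x y, 0 ≤ M x y) (x : α) (y : β) : 0 ≤ maxNormalize M x y :=
  div_nonneg (hM x y) (le_max_of_le_left (sum_nonneg fun z _ ↦ hM x z))

theorem ne_zero_of_maxNormalize_ne_zero {x : α} {y : β} (h : maxNormalize M x y ≠ 0) :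
    M x y ≠ 0 := fun h0 ↦ h (by simp [maxNormalize, h0])

theorem sum_maxNormalize_le_one (hM : ∀ x y, 0 ≤ M x y) (x : α) :
    ∑ y, maxNormalize M x y ≤ 1 := by
  have hentry : ∀ y, maxNormalize M x y ≤ M x y / ∑ z, M x z := fun y ↦ by
    by_cases hy : M x y = 0
    · simp [maxNormalize, hy]
    · have hrow : 0 < ∑ z, M x z :=
        sum_pos' (fun z _ ↦ hM x z) ⟨y, mem_univ y, (hM x y).lt_of_ne' hy⟩
      exact div_le_div_of_nonneg_left (hM x y) hrow (le_max_left _ _)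
  calc ∑ y, maxNormalize M x y ≤ (∑ y, M x y) / ∑ z, M x z := by
        rw [sum_div]
        exact sum_le_sum fun y _ ↦ hentry y
    _ ≤ 1 := div_self_le_one _

theorem isDoublySubstochastic_maxNormalize {M : Matrix α α ℝ} (hM : ∀ x y, 0 ≤ M x y) :
    IsDoublySubstochastic (maxNormalize M) where
  nonneg := maxNormalize_nonneg hM
  row_sum_le_one := sum_maxNormalize_le_one hM
  col_sum_le_one y := by
    simpa [maxNormalize_transpose] using sum_maxNormalize_le_one (M := Mᵀ) (fun y x ↦ hM x y) y

theorem le_sum_maxNormalize (hM : ∀ x y, 0 ≤ M x y) {x : α} (hx : 0 < ∑ y, M x y) {c : ℝ}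
    (hc : ∀ y, M x y ≠ 0 → c * max (∑ z, M x z) (∑ z, M z y) ≤ ∑ z, M x z) :
    c ≤ ∑ y, maxNormalize M x y := by
  calc c = ∑ y, c / (∑ z, M x z) * M x y := by rw [← mul_sum, div_mul_cancel₀ c hx.ne']
    _ ≤ ∑ y, maxNormalize M x y := sum_le_sum fun y _ ↦ by
      by_cases hy : M x y = 0
      · simp [maxNormalize, hy]
      · have hscale : c / ∑ z, M x z ≤ (max (∑ z, M x z) (∑ z, M z y))⁻¹ := by
          rw [div_le_iff₀ hx, ← div_eq_inv_mul, le_div_iff₀ (lt_max_of_lt_left hx)]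
          exact hc y hy
        rw [maxNormalize, Matrix.of_apply, div_eq_inv_mul (M x y)]
        exact mul_le_mul_of_nonneg_right hscale (hM x y)

end MaxNormalize

section SymmetricUnimodal

variable {M : Type*}

/-- `f` is symmetric about `c / 2` and does not increase away from it. -/
def IsSymmUnimodal [LE M] (f : ℤ → M) (c : ℤ) : Prop :=
  ∀ ⦃i j : ℤ⦄, |2 * i - c| ≤ |2 * j - c| → f j ≤ f i

theorem IsSymmUnimodal.apply_sub [PartialOrder M] {f : ℤ → M} {c : ℤ} (hf : IsSymmUnimodal f c)
    (i : ℤ) : f (c - i) = f i := by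
  have hdist : |2 * (c - i) - c| = |2 * i - c| := by
    rw [show 2 * (c - i) - c = -(2 * i - c) by ring, abs_neg]
  exact le_antisymm (hf hdist.ge) (hf hdist.le)

theorem isSymmUnimodal_of_le_add_one [Preorder M] {f : ℤ → M} {c : ℤ}
    (hsymm : ∀ i, f (c - i) = f i) (hstep : ∀ i, 2 * (i + 1) ≤ c → f i ≤ f (i + 1)) :
    IsSymmUnimodal f c := by
  have hmono : MonotoneOn f {i | 2 * i ≤ c} := by
    refine monotoneOn_of_le_add_one ⟨fun i _ j hj k hk ↦ ?_⟩ fun i _ _ hi ↦ hstep i hi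
    exact (mul_le_mul_of_nonneg_left hk.2 zero_le_two).trans hj
  have hfold : ∀ i, ∃ i', 2 * i' ≤ c ∧ |2 * i - c| = c - 2 * i' ∧ f i' = f i := fun i ↦ by
    rcases le_total (2 * i) c with hi | hi
    · exact ⟨i, hi, by rw [abs_of_nonpos (by omega)]; ring, rfl⟩
    · exact ⟨c - i, by omega, by rw [abs_of_nonneg (by omega)]; ring, hsymm i⟩
  intro i j hij
  obtain ⟨i', hi', hi_abs, hfi⟩ := hfold i
  obtain ⟨j', hj', hj_abs, hfj⟩ := hfold j
  rw [← hfi, ← hfj]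
  exact hmono hj' hi' (by omega)

theorem IsSymmUnimodal.sum_range_sub [AddCommMonoid M] [PartialOrder M] [IsOrderedAddMonoid M]
    {f : ℤ → M} {c : ℤ} (hf : IsSymmUnimodal f c) (p : ℕ) :
    IsSymmUnimodal (fun i ↦ ∑ t ∈ range (p + 1), f (i - t)) (c + p) := by
  refine isSymmUnimodal_of_le_add_one (fun i ↦ ?_) fun i hi ↦ ?_
  · rw [← sum_range_reflect]
    refine sum_congr rfl fun t ht ↦ ?_
    rw [← hf.apply_sub (i - t)]
    congr 1
    have := mem_range.1 ht
    omega
  · have hends : f (i - p) ≤ f (i + 1) := hf (by rw [← sq_le_sq]; nlinarith)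
    calc ∑ t ∈ range (p + 1), f (i - t) = ∑ t ∈ range p, f (i - t) + f (i - p) :=
          sum_range_succ _ _
      _ ≤ ∑ t ∈ range p, f (i - t) + f (i + 1) := by gcongr
      _ = ∑ t ∈ range (p + 1), f (i + 1 - t) := by
          rw [sum_range_succ']
          simp

end SymmetricUnimodal

section LevelSizes

/-- The number of points of rank `k` in `[p + 1]^D`; the rank may be any integer. -/
noncomputable def levelCard (p D : ℕ) (k : ℤ) : ℕ :=
  #{x : Fin D → Fin (p + 1) | (rank x : ℤ) = k}

theorem levelCard_zero (p : ℕ) (k : ℤ) : levelCard p 0 k = if k = 0 then 1 else 0 := by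
  simp only [levelCard, rank, univ_eq_empty, sum_empty, Nat.cast_zero, eq_comm (a := (0 : ℤ))]
  split_ifs with hk <;> simp [hk]

theorem levelCard_succ (p D : ℕ) (k : ℤ) :
    levelCard p (D + 1) k = ∑ t ∈ range (p + 1), levelCard p D (k - t) := by
  have hcons : ∀ (t : Fin (p + 1)) (x : Fin D → Fin (p + 1)),
      ((rank (Fin.cons t x : Fin (D + 1) → Fin (p + 1)) : ℤ) = k) ↔
        (rank x : ℤ) = k - (t : ℕ) := fun t x ↦ by
    have : rank (Fin.cons t x : Fin (D + 1) → Fin (p + 1)) = t + rank x := by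
      simp [rank, Fin.sum_univ_succ]
    omega
  rw [← Fin.sum_univ_eq_sum_range (fun t ↦ levelCard p D (k - t))]
  simp only [levelCard, card_filter]
  rw [← (Fin.consEquiv fun _ : Fin (D + 1) ↦ Fin (p + 1)).sum_comp, Fintype.sum_prod_type]
  exact sum_congr rfl fun t _ ↦ sum_congr rfl fun x _ ↦ if_congr (hcons t x) rfl rfl

theorem isSymmUnimodal_levelCard (p D : ℕ) : IsSymmUnimodal (levelCard p D) (p * D) := by
  induction D with
  | zero =>
    intro i j hij
    simp only [Nat.cast_zero, mul_zero, sub_zero, levelCard_zero] at hij ⊢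
    split_ifs with hj hi <;> grind
  | succ D ih =>
    have hsum := ih.sum_range_sub p
    simp only [← levelCard_succ] at hsum
    rwa [Nat.cast_succ, mul_add_one]

theorem card_rank_eq_le_middleLayerCard (p D k : ℕ) :
    #{x : Fin D → Fin (p + 1) | rank x = k} ≤ middleLayerCard (p + 1) D := by
  have hmid : |2 * ((p * D / 2 : ℕ) : ℤ) - p * D| ≤ |2 * (k : ℤ) - p * D| := by
    rw [← Nat.cast_mul]
    generalize p * D = m
    grind
  have h := isSymmUnimodal_levelCard p D hmid
  simp only [levelCard, Nat.cast_inj] at h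
  exact h

end LevelSizes

section UpSteps

variable {n D : ℕ} {i i' : Fin D} {x y z : Fin D → Fin n}

/-- `y` is obtained from `x` by increasing the coordinate `i` by one. -/
def IsUpStep (i : Fin D) (x y : Fin D → Fin n) : Prop :=
  (y i : ℕ) = x i + 1 ∧ ∀ j, j ≠ i → y j = x j

theorem isUpStep_iff_eq_update (hi : (x i : ℕ) + 1 < n) :
    IsUpStep i x y ↔ y = Function.update x i ⟨x i + 1, hi⟩ := by
  simp only [Function.eq_update_iff, IsUpStep, Fin.ext_iff]

namespace IsUpStep

theorem coord_add_one_lt (h : IsUpStep i x y) : (x i : ℕ) + 1 < n := h.1 ▸ (y i).is_lt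

theorem right_unique (hy : IsUpStep i x y) (hz : IsUpStep i x z) : y = z := by
  have hlt := hy.coord_add_one_lt
  rw [isUpStep_iff_eq_update hlt] at hy hz
  rw [hy, hz]

theorem direction_unique (h : IsUpStep i x y) (h' : IsUpStep i' x y) : i = i' := by
  by_contra hne
  have hi := h.1
  rw [h'.2 i hne] at hi
  omega

theorem le (h : IsUpStep i x y) : x ≤ y := by
  intro j
  rcases eq_or_ne j i with rfl | hj
  · exact Fin.le_def.2 (by rw [h.1]; omega)
  · exact (h.2 j hj).ge

theorem sum_add {M : Type*} [AddCommMonoid M] (h : IsUpStep i x y) (F : ℕ → M) :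
    ∑ j, F (y j) + F (x i) = ∑ j, F (x j) + F (x i + 1) := by
  have hrest : ∑ j ∈ univ.erase i, F (y j) = ∑ j ∈ univ.erase i, F (x j) :=
    sum_congr rfl fun j hj ↦ by rw [h.2 j (ne_of_mem_erase hj)]
  rw [← sum_erase_add _ _ (mem_univ i), ← sum_erase_add _ (fun j ↦ F (x j)) (mem_univ i), hrest,
    h.1, add_right_comm]

theorem rank_eq (h : IsUpStep i x y) : rank y = rank x + 1 := by
  have := h.sum_add id
  simp only [id_eq] at this
  unfold rank
  omega

end IsUpStep

theorem card_coord_lt_add_rank_le (hxy : x ≤ y) : #{i | x i < y i} + rank x ≤ rank y := by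
  rw [card_filter, rank, rank, ← sum_add_distrib]
  refine sum_le_sum fun i _ ↦ ?_
  have := Fin.le_def.1 (hxy i)
  split_ifs with hi
  · have := Fin.lt_def.1 hi
    omega
  · omega

theorem card_upStep_le_add_rank_le (hxy : x ≤ y) :
    #{z | (∃ i, IsUpStep i x z) ∧ z ≤ y} + rank x ≤ rank y := by
  refine (Nat.add_le_add_right ?_ _).trans (card_coord_lt_add_rank_le hxy)
  refine card_le_card_of_forall_subsingleton (fun z i ↦ IsUpStep i x z) (fun z hz ↦ ?_)
    fun i _ z hz z' hz' ↦ hz.2.right_unique hz'.2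
  obtain ⟨⟨i, hi⟩, hzy⟩ := (mem_filter.1 hz).2
  refine ⟨i, mem_filter.2 ⟨mem_univ i, ?_⟩, hi⟩
  have := Fin.le_def.1 (hzy i)
  rw [hi.1] at this
  exact Fin.lt_def.2 this

/-- The order-reversing involution of the grid, acting by `k ↦ n - 1 - k` on every coordinate. -/
def gridRev (n D : ℕ) : (Fin D → Fin n) ≃ (Fin D → Fin n) := Equiv.piCongrRight fun _ ↦ Fin.revPerm

@[simp]
theorem gridRev_apply (x : Fin D → Fin n) (i : Fin D) : gridRev n D x i = (x i).rev := rfl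

@[simp]
theorem gridRev_gridRev (x : Fin D → Fin n) : gridRev n D (gridRev n D x) = x := by
  ext; simp

theorem isUpStep_gridRev : IsUpStep i (gridRev n D y) (gridRev n D x) ↔ IsUpStep i x y := by
  have := (x i).is_lt
  have := (y i).is_lt
  simp only [IsUpStep, gridRev_apply, Fin.rev_inj, Fin.val_rev]
  exact and_congr (by omega) (forall₂_congr fun _ _ ↦ eq_comm)

theorem rank_gridRev_add_rank {p : ℕ} (x : Fin D → Fin (p + 1)) :
    rank (gridRev (p + 1) D x) + rank x = p * D := by
  have hcoord : ∀ i, ((gridRev (p + 1) D x i : Fin (p + 1)) : ℕ) + x i = p := fun i ↦ by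
    have := (x i).is_lt
    simp only [gridRev_apply, Fin.val_rev]
    omega
  simp only [rank, ← sum_add_distrib, hcoord, sum_const, card_univ, Fintype.card_fin, smul_eq_mul]
  exact mul_comm D p

end UpSteps

section Raising

variable {p D : ℕ} {i : Fin D} {x y : Fin D → Fin (p + 1)}

/-- The weight of raising a coordinate from `k` to `k + 1` in `{0, ..., p}`. -/
noncomputable def stepWeight (p k : ℕ) : ℝ := (k + 1) * (p - k)

/-- The matrix of steps up in `[p + 1]^D` with their weights. This is the raising operator of `sl₂`
on the `D`-th tensor power of its `(p + 1)`-dimensional representation. -/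
noncomputable def raising (p D : ℕ) : Matrix (Fin D → Fin (p + 1)) (Fin D → Fin (p + 1)) ℝ :=
  Matrix.of fun x y ↦ ∑ i, if IsUpStep i x y then stepWeight p (x i) else 0

/-- The total weight of the steps up from `x`. -/
noncomputable def upWeight (x : Fin D → Fin (p + 1)) : ℝ := ∑ i, stepWeight p (x i)

theorem stepWeight_nonneg (k : Fin (p + 1)) : 0 ≤ stepWeight p k :=
  mul_nonneg (by positivity) (sub_nonneg.2 (mod_cast k.is_le))

theorem upWeight_nonneg (x : Fin D → Fin (p + 1)) : 0 ≤ upWeight x :=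
  sum_nonneg fun i _ ↦ stepWeight_nonneg (x i)

theorem stepWeight_le {k : ℕ} (hk : k < p) : stepWeight p k ≤ (p + 1) * p / 2 := by
  have hp : (1 : ℝ) ≤ p := mod_cast Nat.one_le_of_lt hk
  unfold stepWeight
  nlinarith [sq_nonneg ((k : ℝ) + 1 - (p - k))]

theorem raising_nonneg (x y : Fin D → Fin (p + 1)) : 0 ≤ raising p D x y := by
  rw [raising, Matrix.of_apply]
  exact sum_nonneg fun i _ ↦ ite_nonneg (stepWeight_nonneg (x i)) le_rfl

theorem exists_isUpStep_of_raising_ne_zero (h : raising p D x y ≠ 0) : ∃ i, IsUpStep i x y := by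
  rw [raising, Matrix.of_apply] at h
  obtain ⟨i, -, hi⟩ := exists_ne_zero_of_sum_ne_zero h
  exact ⟨i, (ite_ne_right_iff.1 hi).1⟩

theorem IsUpStep.raising_eq (h : IsUpStep i x y) : raising p D x y = stepWeight p (x i) := by
  rw [raising, Matrix.of_apply, sum_eq_single i (fun j _ hj ↦ if_neg fun hj' ↦
    hj (hj'.direction_unique h)) (by simp), if_pos h]

theorem raising_gridRev (x y : Fin D → Fin (p + 1)) :
    raising p D (gridRev (p + 1) D y) (gridRev (p + 1) D x) = raising p D x y := by
  simp only [raising, Matrix.of_apply, isUpStep_gridRev]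
  refine sum_congr rfl fun i _ ↦ ite_congr rfl (fun h ↦ ?_) fun _ ↦ rfl
  have hy := (y i).is_le
  simp only [gridRev_apply, Fin.val_rev, Nat.add_sub_add_right, stepWeight, Nat.cast_sub hy]
  rw [h.1]
  push_cast
  ring

theorem sum_raising (x : Fin D → Fin (p + 1)) : ∑ y, raising p D x y = upWeight x := by
  simp only [raising, Matrix.of_apply]
  rw [sum_comm]
  refine sum_congr rfl fun i _ ↦ ?_
  by_cases hi : (x i : ℕ) + 1 < p + 1
  · simp [isUpStep_iff_eq_update hi]
  · have htop : (x i : ℕ) = p := by omega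
    simp [stepWeight, htop]

theorem sum_raising_left (y : Fin D → Fin (p + 1)) :
    ∑ x, raising p D x y = upWeight (gridRev (p + 1) D y) := by
  simp only [← raising_gridRev _ y, ← sum_raising]
  exact (gridRev (p + 1) D).sum_comp _

theorem upWeight_sub_upWeight_gridRev (x : Fin D → Fin (p + 1)) :
    upWeight x - upWeight (gridRev (p + 1) D x) = p * D - 2 * rank x := by
  have hcoord : ∀ i, stepWeight p (x i) - stepWeight p (gridRev (p + 1) D x i) =
      p - 2 * (x i : ℕ) := fun i ↦ by
    simp only [gridRev_apply, Fin.val_rev, Nat.add_sub_add_right, stepWeight,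
      Nat.cast_sub (x i).is_le]
    ring
  simp only [upWeight, rank, ← sum_sub_distrib, hcoord]
  simp [mul_sum, mul_comm]

theorem sub_rank_le_upWeight (x : Fin D → Fin (p + 1)) : (p : ℝ) * D - rank x ≤ upWeight x := by
  have hsum : (p : ℝ) * D - rank x = ∑ i, ((p : ℝ) - (x i : ℕ)) := by
    simp [rank, mul_comm]
  rw [hsum]
  refine sum_le_sum fun i _ ↦ le_mul_of_one_le_left (sub_nonneg.2 (mod_cast (x i).is_le)) ?_
  exact le_add_of_nonneg_left (Nat.cast_nonneg _)

theorem rank_le_upWeight_gridRev (x : Fin D → Fin (p + 1)) :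
    (rank x : ℝ) ≤ upWeight (gridRev (p + 1) D x) := by
  have hrank : (rank (gridRev (p + 1) D x) : ℝ) + rank x = p * D :=
    mod_cast rank_gridRev_add_rank x
  linarith [sub_rank_le_upWeight (gridRev (p + 1) D x)]

namespace IsUpStep

theorem upWeight_gridRev_sub_upWeight_le (h : IsUpStep i x y) :
    upWeight (gridRev (p + 1) D y) - upWeight x ≤ p - (p * D - 2 * rank x) := by
  have hstep : upWeight y + stepWeight p (x i) = upWeight x + stepWeight p (x i + 1) :=
    h.sum_add (stepWeight p)
  have hcomm := upWeight_sub_upWeight_gridRev y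
  rw [h.rank_eq] at hcomm
  unfold stepWeight at hstep
  push_cast at hstep hcomm
  linarith [Nat.cast_nonneg (α := ℝ) (x i : ℕ)]

theorem half_le_max_upWeight (h : IsUpStep i x y) :
    (p : ℝ) * D / 2 ≤ max (upWeight x) (upWeight (gridRev (p + 1) D y)) := by
  have hup := sub_rank_le_upWeight x
  have hdown := rank_le_upWeight_gridRev y
  rw [h.rank_eq] at hdown
  push_cast at hdown
  linarith [le_max_left (upWeight x) (upWeight (gridRev (p + 1) D y)),
    le_max_right (upWeight x) (upWeight (gridRev (p + 1) D y))]

end IsUpStep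

end Raising

section GridFlow

variable {p D : ℕ}

/-- The doubly substochastic matrix on the grid `[p + 1]^D` obtained from the weighted steps up. -/
noncomputable def gridFlow (p D : ℕ) : Matrix (Fin D → Fin (p + 1)) (Fin D → Fin (p + 1)) ℝ :=
  maxNormalize (raising p D)

theorem isDoublySubstochastic_gridFlow : IsDoublySubstochastic (gridFlow p D) :=
  isDoublySubstochastic_maxNormalize raising_nonneg

theorem exists_isUpStep_of_gridFlow_ne_zero {x y : Fin D → Fin (p + 1)}
    (h : gridFlow p D x y ≠ 0) : ∃ i, IsUpStep i x y :=
  exists_isUpStep_of_raising_ne_zero (ne_zero_of_maxNormalize_ne_zero h)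

theorem gridFlow_gridRev (x y : Fin D → Fin (p + 1)) :
    gridFlow p D (gridRev (p + 1) D y) (gridRev (p + 1) D x) = gridFlow p D x y := by
  simp only [gridFlow, maxNormalize, Matrix.of_apply, raising_gridRev, sum_raising,
    sum_raising_left, gridRev_gridRev, max_comm (upWeight x)]

theorem sum_gridFlow_left (y : Fin D → Fin (p + 1)) :
    ∑ x, gridFlow p D x y = ∑ z, gridFlow p D (gridRev (p + 1) D y) z := by
  simp only [← gridFlow_gridRev _ y]
  exact (gridRev (p + 1) D).sum_comp _

theorem gridFlow_le (hD : 1 ≤ D) (x y : Fin D → Fin (p + 1)) :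
    gridFlow p D x y ≤ (p + 1) / D := by
  by_cases h : gridFlow p D x y = 0
  · rw [h]
    positivity
  obtain ⟨i, hi⟩ := exists_isUpStep_of_gridFlow_ne_zero h
  have hlt : (x i : ℕ) < p := Nat.succ_lt_succ_iff.1 hi.coord_add_one_lt
  have hD' : (D : ℝ) ≠ 0 := by positivity
  simp only [gridFlow, maxNormalize, Matrix.of_apply, sum_raising, sum_raising_left, hi.raising_eq]
  refine div_le_of_le_mul₀ (le_max_of_le_left (upWeight_nonneg x)) (by positivity) ?_
  calc stepWeight p (x i) ≤ (p + 1) * p / 2 := stepWeight_le hlt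
    _ = (p + 1) / D * (p * D / 2) := by field_simp
    _ ≤ _ := mul_le_mul_of_nonneg_left hi.half_le_max_upWeight (by positivity)

theorem sum_gridFlow_below_le (hD : 1 ≤ D) {x y : Fin D → Fin (p + 1)} (hxy : x ≤ y) :
    ∑ z with z ≤ y, gridFlow p D x z ≤ (p + 1) / D * (rank y - rank x) := by
  have hcard : (#{z | (∃ i, IsUpStep i x z) ∧ z ≤ y} : ℝ) ≤ rank y - rank x :=
    le_sub_iff_add_le.2 (mod_cast card_upStep_le_add_rank_le hxy)
  calc ∑ z with z ≤ y, gridFlow p D x z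
      = ∑ z with (∃ i, IsUpStep i x z) ∧ z ≤ y, gridFlow p D x z := by
        refine (sum_subset (fun z hz ↦ ?_) fun z hz hz' ↦ ?_).symm
        · exact mem_filter.2 ⟨mem_univ z, (mem_filter.1 hz).2.2⟩
        · by_contra hne
          exact hz' (mem_filter.2 ⟨mem_univ z, exists_isUpStep_of_gridFlow_ne_zero hne,
            (mem_filter.1 hz).2⟩)
    _ ≤ #{z | (∃ i, IsUpStep i x z) ∧ z ≤ y} • ((p + 1) / D : ℝ) :=
        sum_le_card_nsmul _ _ _ fun z _ ↦ gridFlow_le hD x z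
    _ ≤ (p + 1) / D * (rank y - rank x) := by
        rw [nsmul_eq_mul, mul_comm]
        exact mul_le_mul_of_nonneg_left hcard (by positivity)

/-- A bound for the amount by which the row sums (below the middle rank) and the column sums (above
it) of `gridFlow` at rank `k` fall short of `1`. Only ranks near the middle contribute. -/
noncomputable def flowDefect (p D k : ℕ) : ℝ :=
  if p * D < 2 * k + p ∧ 2 * k < p * D + p then 2 / D else 0

theorem flowDefect_nonneg (p D k : ℕ) : 0 ≤ flowDefect p D k :=
  ite_nonneg (by positivity) le_rfl

theorem flowDefect_rank_gridRev (x : Fin D → Fin (p + 1)) :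
    flowDefect p D (rank (gridRev (p + 1) D x)) = flowDefect p D (rank x) := by
  have := rank_gridRev_add_rank x
  exact if_congr (by omega) rfl rfl

theorem IsUpStep.one_sub_flowDefect_mul_le_upWeight (hD : 1 ≤ D) {i : Fin D}
    {x y : Fin D → Fin (p + 1)} (h : IsUpStep i x y) (hx : 2 * rank x ≤ p * D) :
    (1 - flowDefect p D (rank x)) * max (upWeight x) (upWeight (gridRev (p + 1) D y)) ≤
      upWeight x := by
  have hdefect := flowDefect_nonneg p D (rank x)
  have hmax := h.half_le_max_upWeight
  have hdiff := h.upWeight_gridRev_sub_upWeight_le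
  rcases le_total (upWeight (gridRev (p + 1) D y)) (upWeight x) with hle | hle
  · rw [max_eq_left hle]
    exact mul_le_of_le_one_left (upWeight_nonneg x) (by linarith)
  · rw [max_eq_right hle] at hmax ⊢
    by_cases hnear : p * D < 2 * rank x + p
    · have hvalue : flowDefect p D (rank x) = 2 / D :=
        if_pos ⟨hnear, by have := h.coord_add_one_lt; omega⟩
      have hp : (p : ℝ) ≤ 2 / D * upWeight (gridRev (p + 1) D y) := by
        calc (p : ℝ) = 2 / D * (p * D / 2) := by field_simp
          _ ≤ _ := mul_le_mul_of_nonneg_left hmax (by positivity)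
      have hx' : 2 * (rank x : ℝ) ≤ p * D := mod_cast hx
      rw [hvalue]
      linarith
    · have hfar : 2 * (rank x : ℝ) + p ≤ p * D := mod_cast not_lt.1 hnear
      exact (mul_le_of_le_one_left ((upWeight_nonneg x).trans hle) (by linarith)).trans
        (by linarith)

theorem one_sub_flowDefect_le_sum_gridFlow (hD : 1 ≤ D) {x : Fin D → Fin (p + 1)}
    (hx : 2 * rank x < p * D) : 1 - flowDefect p D (rank x) ≤ ∑ y, gridFlow p D x y := by
  have hpos : 0 < upWeight x := by
    have hx' : 2 * (rank x : ℝ) < p * D := mod_cast hx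
    linarith [sub_rank_le_upWeight x, Nat.cast_nonneg (α := ℝ) (rank x)]
  refine le_sum_maxNormalize raising_nonneg (by rwa [sum_raising]) fun y hy ↦ ?_
  obtain ⟨i, hi⟩ := exists_isUpStep_of_raising_ne_zero hy
  rw [sum_raising, sum_raising_left]
  exact hi.one_sub_flowDefect_mul_le_upWeight hD hx.le

theorem one_sub_flowDefect_le_sum_gridFlow_left (hD : 1 ≤ D) {y : Fin D → Fin (p + 1)}
    (hy : p * D < 2 * rank y) : 1 - flowDefect p D (rank y) ≤ ∑ x, gridFlow p D x y := by
  rw [sum_gridFlow_left, ← flowDefect_rank_gridRev]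
  have := rank_gridRev_add_rank y
  exact one_sub_flowDefect_le_sum_gridFlow hD (by omega)

theorem sum_flowDefect_le (p D : ℕ) :
    ∑ x : Fin D → Fin (p + 1), flowDefect p D (rank x) ≤
      2 * (p + 1) / D * middleLayerCard (p + 1) D := by
  let s := (p * D - p) / 2
  have hcard : #{x : Fin D → Fin (p + 1) | p * D < 2 * rank x + p ∧ 2 * rank x < p * D + p} ≤
      middleLayerCard (p + 1) D * #(Ico s (s + (p + 1))) := by
    refine card_le_mul_card_image_of_maps_to (f := rank) (fun x hx ↦ ?_) _ fun k _ ↦ ?_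
    · obtain ⟨hlow, hhigh⟩ := (mem_filter.1 hx).2
      exact mem_Ico.2 (by omega)
    · refine (card_le_card fun x hx ↦ ?_).trans (card_rank_eq_le_middleLayerCard p D k)
      exact mem_filter.2 ⟨mem_univ x, (mem_filter.1 hx).2⟩
  rw [Nat.card_Ico, Nat.add_sub_cancel_left] at hcard
  simp only [flowDefect]
  rw [← sum_filter, sum_const, nsmul_eq_mul]
  calc _ ≤ (middleLayerCard (p + 1) D * (p + 1) : ℝ) * (2 / D) :=
        mul_le_mul_of_nonneg_right (mod_cast hcard) (by positivity)
    _ = _ := by ring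

theorem chainMass_gridFlow_le (hD : 1 ≤ D) :
    chainMass (gridFlow p D) ≤ (1 + 2 * (p + 1) / D) * middleLayerCard (p + 1) D := by
  have hrank : ∀ x y, gridFlow p D x y ≠ 0 → rank y = rank x + 1 := fun x y h ↦
    (exists_isUpStep_of_gridFlow_ne_zero h).choose_spec.rank_eq
  calc chainMass (gridFlow p D)
      ≤ #{x : Fin D → Fin (p + 1) | rank x = p * D / 2} + ∑ x, flowDefect p D (rank x) :=
        chainMass_le_card_level_add_sum hrank (p * D / 2) (fun x ↦ flowDefect_nonneg p D (rank x))
          (fun x hx ↦ one_sub_flowDefect_le_sum_gridFlow hD (by omega))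
          fun y hy ↦ one_sub_flowDefect_le_sum_gridFlow_left hD (by omega)
    _ ≤ middleLayerCard (p + 1) D + 2 * (p + 1) / D * middleLayerCard (p + 1) D :=
        add_le_add_right (sum_flowDefect_le p D) _
    _ = _ := by ring

theorem card_sub_le_card_farPairs_mul (hD : 1 ≤ D) (X : Finset (Fin D → Fin (p + 1))) (a : ℕ) :
    (#X : ℝ) - a * ((1 + 2 * (p + 1) / D) * middleLayerCard (p + 1) D) ≤
      #(farPairs rank X a) * (a.factorial * ((p + 1) / D) ^ a) :=
  calc (#X : ℝ) - a * ((1 + 2 * (p + 1) / D) * middleLayerCard (p + 1) D)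
      ≤ #X - a * chainMass (gridFlow p D) := by
        gcongr
        exact chainMass_gridFlow_le hD
    _ ≤ #(farPairs rank X a) * (a.factorial * ((p + 1) / D) ^ a) :=
        card_sub_mul_chainMass_le_card_farPairs_mul (by positivity) isDoublySubstochastic_gridFlow
          (fun x y h ↦ (exists_isUpStep_of_gridFlow_ne_zero h).choose_spec.rank_eq)
          (fun x y h ↦ (exists_isUpStep_of_gridFlow_ne_zero h).choose_spec.le)
          (fun x y hxy ↦ sum_gridFlow_below_le hD hxy) X a

end GridFlow

theorem stmt_15_general (n D a : ℕ) (hD : 1 ≤ D) (b : ℝ) (X : Finset (Fin D → Fin n))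
    (hX : a * (1 + 2 * n / D) * middleLayerCard n D + b ≤ #X) :
    b / (a.factorial * (n : ℝ) ^ a) * (D : ℝ) ^ a ≤ #(farPairs rank X a) := by
  rcases n with _ | p
  · have : IsEmpty (Fin D → Fin 0) := ⟨fun x ↦ (x ⟨0, hD⟩).elim0⟩
    have hcard : (#X : ℝ) = 0 := by simp [X.eq_empty_of_isEmpty]
    have hb : b ≤ 0 := by
      rw [hcard] at hX
      exact (le_add_of_nonneg_left (by positivity)).trans hX
    exact (mul_nonpos_of_nonpos_of_nonneg (div_nonpos_of_nonpos_of_nonneg hb (by positivity))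
      (by positivity)).trans (Nat.cast_nonneg _)
  · have hpairs := card_sub_le_card_farPairs_mul hD X a
    rw [div_pow, ← mul_div_assoc, ← mul_div_assoc, le_div_iff₀ (by positivity)] at hpairs
    rw [div_mul_eq_mul_div, div_le_iff₀ (by positivity)]
    push_cast at hX ⊢
    exact (mul_le_mul_of_nonneg_right (by linarith) (by positivity)).trans hpairs

/-- Supersaturation (Theorem 3): if `X ⊆ [n]^D` has at least
`a·(1 + 3n/D)·N_{n,D} + b` elements, then `X` contains at least `(b/(a!·n^a))·D^a`
pairs `(x, y)` with `x ≼ y` and `r(y) - r(x) ≥ a`. -/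
theorem stmt_15 (n D a b : ℕ) (hD : 1 ≤ D) (X : Finset (Fin D → Fin n))
    (hX : (a : ℝ) * (1 + 3 * n / D) * middleLayerCard n D + b ≤ X.card) :
    ((b : ℝ) / (Nat.factorial a * (n : ℝ) ^ a)) * (D : ℝ) ^ a ≤
      ((X ×ˢ X).filter (fun p : (Fin D → Fin n) × (Fin D → Fin n) =>
        p.1 ≤ p.2 ∧ rank p.1 + a ≤ rank p.2)).card := by
  have hconst : (2 : ℝ) * n / D ≤ 3 * n / D := by gcongr; norm_num
  convert stmt_15_general n D a hD b X (hX.trans' (by gcongr)) using 3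
  ext p; simp [farPairs]
end

section
/- For every n ≥ 2 and D ≥ 2, the number of antichains A_{D,n} in the box {1,...,n}^D (with the product partial order) satisfies A_{D,n} ≤ 2^{(1 + C_n·(log D)/√D)·N_{D,n}}, where N_{D,n} is the size of the middle layer {x : Σ x_i = ⌊D(n+1)/2⌋} and C_n is a constant depending only on n. -/
/-!
The box has a partition into chains each meeting the middle layer, so more than `N` points, where
`N` is the size of that layer, span a comparable pair inside a chain. Permuting the coordinates at
random gives other such partitions, and a fixed pair `x < y` rarely lands in one chain: if
`x` and `y` take every value at least `q` times, then some coordinate `i` has `q / 2` coordinates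
`j` with `x j = x i` and `y j ≠ y i`, and transposing `i` and `j` fixes `x` but moves `y` to an
incomparable point. Hence a set `F` of such points spans at least `(#F - N) * q / 2` comparable
pairs, with `q` of order `D`.

If `F` is appreciably larger than `N`, some `x` in `F` therefore has many points of `F` above it. An
antichain either omits `x` or omits all of those, and this recursion is run first down to size `2N`
and then, at a slower rate, down to size `(1 + log D / √D) N`, where all subsets are counted. By
Chebyshev's inequality, the points not covered by this argument number `O(n ^ D / D)`, and
`n ^ D = O(√D N)` because the middle layer is the largest.
-/

open Classical

open Finset MeasureTheory ProbabilityTheory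
open scoped BigOperators

section ChainFibers

variable {α β γ : Type*}

/-- The fibres of `g` are chains, that is, `g` names the blocks of a partition into chains. -/
def HasChainFibers [LE α] (g : α → β) : Prop :=
  ∀ x y, g x = g y → x ≤ y ∨ y ≤ x

theorem HasChainFibers.comp [LE α] [LE γ] {g : α → β} (hg : HasChainFibers g) {f : γ → α}
    (hf : ∀ x y, f x ≤ f y → x ≤ y) : HasChainFibers (g ∘ f) := fun x y hxy =>
  (hg (f x) (f y) hxy).imp (hf x y) (hf y x)

theorem HasChainFibers.eq_of_strictMono [PartialOrder α] {g : α → β} (hg : HasChainFibers g)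
    {ρ : α → ℕ} (hρ : StrictMono ρ) {x y : α} (hgxy : g x = g y) (hρxy : ρ x = ρ y) : x = y := by
  rcases hg x y hgxy with hle | hle
  · exact hle.eq_of_not_lt fun hlt => (hρ hlt).ne hρxy
  · exact (hle.eq_of_not_lt fun hlt => (hρ hlt).ne' hρxy).symm

end ChainFibers

section SymmetricChains

variable {α β κ : Type*} {ρ : α → ℕ} {R : ℕ} {chain : α → κ} {bot : κ → ℕ}

/-- A symmetric chain decomposition of a poset `α` with rank function `ρ` and top rank `R`. The
chains are the fibres of `chain`, and the chain `k` meets every rank from `bot k` to `R - bot k`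
and no other. -/
structure IsSymmChainDecomp [LE α] (ρ : α → ℕ) (R : ℕ) (chain : α → κ) (bot : κ → ℕ) : Prop where
  hasChainFibers : HasChainFibers chain
  bot_le_rank : ∀ x, bot (chain x) ≤ ρ x
  rank_add_bot_le : ∀ x, ρ x + bot (chain x) ≤ R
  exists_rank_eq : ∀ x r, bot (chain x) ≤ r → r + bot (chain x) ≤ R →
    ∃ y, chain y = chain x ∧ ρ y = r

namespace IsSymmChainDecomp

theorem comp_orderIso [LE α] [LE β] (h : IsSymmChainDecomp ρ R chain bot) (e : β ≃o α) :
    IsSymmChainDecomp (ρ ∘ e) R (chain ∘ e) bot where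
  hasChainFibers := h.hasChainFibers.comp fun _ _ => e.le_iff_le.1
  bot_le_rank x := h.bot_le_rank (e x)
  rank_add_bot_le x := h.rank_add_bot_le (e x)
  exists_rank_eq x r hr hrR := by
    obtain ⟨y, hy⟩ := h.exists_rank_eq (e x) r hr hrR
    exact ⟨e.symm y, by simpa using hy⟩

/-- The chain index of a point of `Fin (m + 1) × α`: a chain `k` of `α` of length `ℓ` gives the
rectangle `Fin (m + 1) × k`, which is cut into hooks, the hook `j` running up the chain `k` at
height `j` as far as the element with `j` elements above it and then straight up from there. -/
def hook (ρ : α → ℕ) (R : ℕ) (chain : α → κ) (bot : κ → ℕ) {m : ℕ} (p : Fin (m + 1) × α) : κ × ℕ :=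
  (chain p.2, min (p.1 : ℕ) (R - bot (chain p.2) - ρ p.2))

theorem hasChainFibers_hook [PartialOrder α] (h : IsSymmChainDecomp ρ R chain bot)
    (hρ : StrictMono ρ) (m : ℕ) :
    HasChainFibers (hook ρ R chain bot : Fin (m + 1) × α → κ × ℕ) := by
  have comparable_of_le : ∀ p q : Fin (m + 1) × α, p.2 ≤ q.2 →
      hook ρ R chain bot p = hook ρ R chain bot q → p ≤ q ∨ q ≤ p := by
    intro p q hle hpq
    obtain ⟨hchain, hmin⟩ := Prod.mk.inj hpq
    rw [hchain] at hmin
    rcases hle.eq_or_lt with heq | hlt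
    · exact (le_total p.1 q.1).imp (⟨·, hle⟩) (⟨·, heq.ge⟩)
    · left
      have := hρ hlt
      have := h.rank_add_bot_le q.2
      exact ⟨Fin.le_def.2 (by omega), hle⟩
  intro p q hpq
  rcases h.hasChainFibers p.2 q.2 (Prod.mk.inj hpq).1 with hle | hle
  · exact comparable_of_le p q hle hpq
  · exact (comparable_of_le q p hle hpq.symm).symm

theorem fin_prod [PartialOrder α] (h : IsSymmChainDecomp ρ R chain bot) (hρ : StrictMono ρ)
    (m : ℕ) :
    IsSymmChainDecomp (fun p : Fin (m + 1) × α => (p.1 : ℕ) + ρ p.2) (m + R)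
      (hook ρ R chain bot) (fun k => bot k.1 + k.2) where
  hasChainFibers := h.hasChainFibers_hook hρ m
  bot_le_rank p := by
    have := h.bot_le_rank p.2
    dsimp only [hook]
    omega
  rank_add_bot_le p := by
    have := h.rank_add_bot_le p.2
    have := p.1.is_le
    dsimp only [hook]
    omega
  exists_rank_eq := by
    rintro ⟨a, x⟩ r hr hrR
    have := h.bot_le_rank x
    have := h.rank_add_bot_le x
    have := a.is_le
    dsimp only [hook] at hr hrR ⊢
    generalize hj : min (a : ℕ) (R - bot (chain x) - ρ x) = j at *
    by_cases hcorner : r + bot (chain x) ≤ R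
    · obtain ⟨y, hy, hyr⟩ := h.exists_rank_eq x (r - j) (by omega) (by omega)
      refine ⟨(⟨j, by omega⟩, y), ?_, ?_⟩
      · simp only [hy, Prod.mk.injEq, true_and]
        omega
      · simp only [hyr]
        omega
    · obtain ⟨y, hy, hyr⟩ := h.exists_rank_eq x (R - bot (chain x) - j) (by omega) (by omega)
      refine ⟨(⟨r - (R - bot (chain x) - j), by omega⟩, y), ?_, ?_⟩
      · simp only [hy, Prod.mk.injEq, true_and]
        omega
      · simp only [hyr]
        omega

theorem exists_map_to_middle [LE α] (h : IsSymmChainDecomp ρ R chain bot) :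
    ∃ g : α → α, HasChainFibers g ∧ ∀ x, ρ (g x) = R / 2 := by
  have exists_middle (x : α) : ∃ y, chain y = chain x ∧ ρ y = R / 2 := by
    have := h.bot_le_rank x
    have := h.rank_add_bot_le x
    exact h.exists_rank_eq x _ (by omega) (by omega)
  choose g hg_chain hg_rank using exists_middle
  refine ⟨g, fun x y hxy => h.hasChainFibers x y ?_, hg_rank⟩
  rw [← hg_chain x, ← hg_chain y, hxy]

end IsSymmChainDecomp

theorem strictMono_sum_val {ι : Type*} [Fintype ι] {m : ι → ℕ} :
    StrictMono fun x : ∀ i, Fin (m i) => ∑ i, (x i : ℕ) := by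
  have hval : StrictMono fun (x : ∀ i, Fin (m i)) i => (x i : ℕ) :=
    Monotone.strictMono_of_injective (fun _ _ hxy i => hxy i)
      fun _ _ hxy => funext fun i => Fin.ext (congrFun hxy i)
  exact Fintype.sum_strictMono.comp hval

theorem exists_isSymmChainDecomp_pi_fin {D : ℕ} (m : Fin D → ℕ) :
    ∃ (κ : Type) (chain : (∀ i, Fin (m i + 1)) → κ) (bot : κ → ℕ),
      IsSymmChainDecomp (fun x => ∑ i, (x i : ℕ)) (∑ i, m i) chain bot := by
  induction D with
  | zero =>
    exact ⟨Unit, fun _ => (), fun _ => 0, fun x y _ => Or.inl (Subsingleton.le x y),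
      by simp, by simp, fun x r _ hr => ⟨x, rfl, by simpa [eq_comm] using hr⟩⟩
  | succ D ih =>
    obtain ⟨κ, chain, bot, h⟩ := ih (Fin.tail m)
    have hprod := (h.fin_prod strictMono_sum_val (m 0)).comp_orderIso
      (Fin.consOrderIso fun i => Fin (m i + 1)).symm
    simp only [Fin.sum_univ_succ]
    exact ⟨_, _, _, hprod⟩

end SymmetricChains

section Pairs

variable {α β : Type*} [PartialOrder α]

/-- The edges of the comparability graph of `F`, each listed with its smaller end first. -/
noncomputable def ltPairs (F : Finset α) : Finset (α × α) :=
  {p ∈ F ×ˢ F | p.1 < p.2}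

theorem card_ltPairs (F : Finset α) : #(ltPairs F) = ∑ x ∈ F, #{y ∈ F | x < y} := by
  simp only [ltPairs, card_filter, sum_product]

theorem exists_le_card_filter_lt {F : Finset α} {d : ℝ} (hF : F.Nonempty)
    (h : d * #F ≤ #(ltPairs F)) : ∃ x ∈ F, d ≤ #{y ∈ F | x < y} := by
  refine exists_le_of_sum_le hF ?_
  rw [sum_const, nsmul_eq_mul, mul_comm]
  exact_mod_cast card_ltPairs F ▸ h

theorem card_le_card_add_card_filter_ltPairs {g : α → β} (hg : HasChainFibers g) {F : Finset α}
    {M : Finset β} (hgM : ∀ x ∈ F, g x ∈ M) :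
    #F ≤ #M + #{p ∈ ltPairs F | g p.1 = g p.2} := by
  let bottoms : Finset α := {y ∈ F | ∀ x ∈ F, g x = g y → ¬ x < y}
  have card_bottoms : #bottoms ≤ #M := by
    refine card_le_card_of_injOn g (fun y hy => hgM y (mem_filter.1 hy).1) fun x hx y hy hxy => ?_
    obtain ⟨hxF, hx⟩ := mem_filter.1 hx
    obtain ⟨hyF, hy⟩ := mem_filter.1 hy
    rcases hg x y hxy with hle | hle
    · exact hle.eq_of_not_lt (hy x hxF hxy)
    · exact (hle.eq_of_not_lt (hx y hyF hxy.symm)).symm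
  have card_rest : #(F \ bottoms) ≤ #{p ∈ ltPairs F | g p.1 = g p.2} := by
    refine (card_le_card fun y hy => ?_).trans (card_image_le (f := Prod.snd))
    simp only [bottoms, mem_sdiff, mem_filter, not_and, not_forall, not_not] at hy
    obtain ⟨hyF, hy⟩ := hy
    obtain ⟨x, hxF, hxy, hlt⟩ := hy hyF
    exact mem_image.2 ⟨(x, y), by simp [ltPairs, *], rfl⟩
  calc #F = #(F \ bottoms) + #bottoms := (card_sdiff_add_card_eq_card (filter_subset _ F)).symm
    _ ≤ #M + #{p ∈ ltPairs F | g p.1 = g p.2} := by omega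

end Pairs

section AntichainCount

variable {α : Type*} [PartialOrder α]

/-- The number of antichains contained in `F`. -/
noncomputable def antichainCount (F : Finset α) : ℕ :=
  #(F.powerset.filter fun A : Finset α => IsAntichain (· ≤ ·) (A : Set α))

theorem antichainCount_le_two_pow (F : Finset α) : antichainCount F ≤ 2 ^ #F :=
  (card_filter_le _ _).trans (card_powerset F).le

theorem antichainCount_le_add (F : Finset α) (x : α) :
    antichainCount F ≤ antichainCount (F.erase x) + antichainCount {y ∈ F | ¬x ≤ y} := by
  rw [antichainCount, ← card_filter_add_card_filter_not fun A : Finset α => x ∈ A, add_comm]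
  refine add_le_add (card_le_card fun A hA => ?_) (card_le_card_of_injOn (·.erase x) ?_ ?_)
  · simp only [mem_filter, mem_powerset] at hA ⊢
    exact ⟨subset_erase.2 ⟨hA.1.1, hA.2⟩, hA.1.2⟩
  · intro A hA
    simp only [coe_filter, mem_filter, mem_powerset, Set.mem_ofPred_eq] at hA ⊢
    obtain ⟨⟨hAF, hA⟩, hxA⟩ := hA
    refine ⟨fun y hy => ?_, hA.subset (coe_subset.2 (erase_subset x A))⟩
    obtain ⟨hyx, hyA⟩ := mem_erase.1 hy
    exact mem_filter.2 ⟨hAF hyA, hA hxA hyA hyx.symm⟩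
  · intro A hA B hB hAB
    exact erase_injOn' x (mem_filter.1 hA).2 (mem_filter.1 hB).2 hAB

theorem antichainCount_le_two_pow_mul [DecidableEq α] (F T : Finset α) :
    antichainCount F ≤ 2 ^ #(F \ T) * antichainCount T := by
  rw [← card_powerset, antichainCount, antichainCount, ← card_product]
  refine card_le_card_of_injOn (fun A => (A \ T, A ∩ T)) (fun A hA => ?_) fun A _ B _ hAB => ?_
  · simp only [coe_filter, mem_powerset, Set.mem_ofPred_eq, coe_product, Set.mem_prod,
      mem_coe] at hA ⊢
    exact ⟨sdiff_subset_sdiff hA.1 le_rfl, inter_subset_right,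
      hA.2.subset (coe_subset.2 inter_subset_left)⟩
  · obtain ⟨hsdiff, hinter⟩ := Prod.mk.inj hAB
    rw [← sdiff_union_inter A T, ← sdiff_union_inter B T, hsdiff, hinter]

theorem card_filter_not_le_add_card_filter_lt (F : Finset α) (x : α) :
    #{y ∈ F | ¬x ≤ y} + #{y ∈ F | x < y} = #(F.erase x) := by
  rw [← card_union_of_disjoint (disjoint_filter.2 fun y _ hxy hlt => hxy hlt.le), ← filter_or]
  congr 1
  ext y
  simp only [mem_filter, mem_erase, lt_iff_le_and_ne]
  grind

theorem antichainCount_le_mul_exp {T : Finset α} {M d t B : ℝ} (hB₀ : 0 ≤ B)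
    (htd : Real.exp (-(t * d)) ≤ t) (hB : ∀ F ⊆ T, #F ≤ M → antichainCount F ≤ B)
    (hd : ∀ F ⊆ T, M < #F → ∃ x ∈ F, d ≤ #{y ∈ F | x < y}) :
    antichainCount T ≤ B * Real.exp (t * #T) := by
  have ht : 0 ≤ t := (Real.exp_nonneg _).trans htd
  suffices h : ∀ F ⊆ T, antichainCount F ≤ B * Real.exp (t * #F) from h T Subset.rfl
  intro F
  induction F using Finset.strongInduction with
  | H F ih =>
    intro hFT
    rcases le_or_gt (#F : ℝ) M with hM | hM
    · exact (hB F hFT hM).trans (le_mul_of_one_le_right hB₀ (Real.one_le_exp (by positivity)))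
    obtain ⟨x, hxF, hxd⟩ := hd F hFT hM
    have card_erase : (#(F.erase x) : ℝ) + 1 = #F := by exact_mod_cast card_erase_add_one hxF
    have card_not_ge : (#{y ∈ F | ¬x ≤ y} : ℝ) ≤ #(F.erase x) - d := by
      have : (#{y ∈ F | ¬x ≤ y} : ℝ) + #{y ∈ F | x < y} = #(F.erase x) := by
        exact_mod_cast card_filter_not_le_add_card_filter_lt F x
      linarith
    have ih_erase := ih _ (erase_ssubset hxF) ((erase_subset x F).trans hFT)
    have ih_not_ge := ih {y ∈ F | ¬x ≤ y} (filter_ssubset.2 ⟨x, hxF, not_not.2 le_rfl⟩)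
      ((filter_subset _ F).trans hFT)
    calc (antichainCount F : ℝ)
        ≤ antichainCount (F.erase x) + antichainCount {y ∈ F | ¬x ≤ y} := by
          exact_mod_cast antichainCount_le_add F x
      _ ≤ B * Real.exp (t * #(F.erase x)) + B * Real.exp (t * (#(F.erase x) - d)) := by
          refine add_le_add ih_erase (ih_not_ge.trans ?_)
          gcongr
      _ = B * Real.exp (t * #(F.erase x)) * (1 + Real.exp (-(t * d))) := by
          rw [mul_sub, sub_eq_add_neg, Real.exp_add]
          ring
      _ ≤ B * Real.exp (t * #(F.erase x)) * Real.exp t := by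
          gcongr
          linarith [Real.add_one_le_exp t]
      _ = B * Real.exp (t * #F) := by
          rw [mul_assoc, ← Real.exp_add, ← card_erase, mul_add_one]

/-- Supersaturation of `T` above the threshold `N`: a subset of `T` spans at least `a` comparable
pairs for each of its elements in excess of `N`. -/
def IsSupersaturated (T : Finset α) (N : ℕ) (a : ℝ) : Prop :=
  ∀ F ⊆ T, ((#F : ℝ) - N) * a ≤ #(ltPairs F)

namespace IsSupersaturated

variable {T F : Finset α} {N : ℕ} {a δ t B t₁ t₂ : ℝ}

theorem mono (h : IsSupersaturated T N a) (hF : F ⊆ T) : IsSupersaturated F N a :=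
  fun G hG => h G (hG.trans hF)

theorem exists_le_card_filter_lt (h : IsSupersaturated T N a) (ha : 0 ≤ a) (hδ : 0 ≤ δ)
    (hF : F ⊆ T) (hFN : (1 + δ) * N < #F) : ∃ x ∈ F, δ / (1 + δ) * a ≤ #{y ∈ F | x < y} := by
  have card_pos : (0 : ℝ) < #F := lt_of_le_of_lt (by positivity) hFN
  refine _root_.exists_le_card_filter_lt (Finset.card_pos.1 (by exact_mod_cast card_pos))
    (le_trans ?_ (h F hF))
  have excess : δ / (1 + δ) * #F ≤ #F - N := by
    rw [div_mul_eq_mul_div, div_le_iff₀ (by positivity)]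
    linarith
  calc δ / (1 + δ) * a * #F = δ / (1 + δ) * #F * a := by ring
    _ ≤ (#F - N) * a := by gcongr

theorem antichainCount_le_mul_exp (h : IsSupersaturated T N a) (ha : 0 ≤ a) (hδ : 0 ≤ δ)
    (ht : Real.exp (-(t * (δ / (1 + δ) * a))) ≤ t) (hB₀ : 0 ≤ B)
    (hB : ∀ F ⊆ T, #F ≤ (1 + δ) * N → antichainCount F ≤ B) :
    antichainCount T ≤ B * Real.exp (t * #T) :=
  _root_.antichainCount_le_mul_exp hB₀ ht hB fun _ => h.exists_le_card_filter_lt ha hδ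

theorem antichainCount_le_two_rpow (h : IsSupersaturated T N a) (ha : 0 ≤ a) (hδ : 0 ≤ δ)
    (ht₁ : Real.exp (-(t₁ * (a / 2))) ≤ t₁) (ht₂ : Real.exp (-(t₂ * (δ / (1 + δ) * a))) ≤ t₂) :
    antichainCount T ≤ 2 ^ ((1 + δ) * N) * Real.exp (t₂ * (2 * N)) * Real.exp (t₁ * #T) := by
  have ht₂_nonneg : 0 ≤ t₂ := (Real.exp_nonneg _).trans ht₂
  refine h.antichainCount_le_mul_exp ha zero_le_one ?_ (by positivity) fun F hFT hF => ?_
  · rwa [one_add_one_eq_two, one_div_mul_eq_div]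
  calc (antichainCount F : ℝ) ≤ 2 ^ ((1 + δ) * N) * Real.exp (t₂ * #F) := by
        refine (h.mono hFT).antichainCount_le_mul_exp ha hδ ht₂ (by positivity) fun G _ hG => ?_
        calc (antichainCount G : ℝ) ≤ 2 ^ #G := by exact_mod_cast antichainCount_le_two_pow G
          _ = 2 ^ (#G : ℝ) := (Real.rpow_natCast _ _).symm
          _ ≤ 2 ^ ((1 + δ) * N) := Real.rpow_le_rpow_of_exponent_le one_le_two hG
    _ ≤ 2 ^ ((1 + δ) * N) * Real.exp (t₂ * (2 * N)) := by
        rw [one_add_one_eq_two] at hF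
        gcongr

end IsSupersaturated

end AntichainCount

section Supersaturation

variable {ι V β : Type*}

/-- `x` takes every value at least `q` times. For `q` a fixed fraction of `card ι` this is the
typical behaviour of a point of the power `ι → V`. -/
def IsSpread [Fintype ι] (q : ℝ) (x : ι → V) : Prop :=
  ∀ v, q ≤ #{i | x i = v}

theorem IsSpread.surjective [Fintype ι] {q : ℝ} (hq : 0 < q) {x : ι → V} (hx : IsSpread q x) :
    x.Surjective := fun v => by
  have hv : 0 < #{i | x i = v} := by exact_mod_cast hq.trans_le (hx v)
  obtain ⟨i, hi⟩ := card_pos.1 hv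
  exact ⟨i, (mem_filter.1 hi).2⟩

theorem comp_swap_eq_self {x : ι → V} {i j : ι} (h : x j = x i) : x ∘ Equiv.swap i j = x := by
  rw [Equiv.comp_swap_eq_update, ← h, Function.update_eq_self, h, Function.update_eq_self]

variable [PartialOrder V]

theorem comp_perm_eq_of_comp_perm_le [Finite ι] {x : ι → V} {σ τ : Equiv.Perm ι}
    (h : x ∘ σ ≤ x ∘ τ) : x ∘ σ = x ∘ τ := by
  let T : (ι → V) → ι → V := fun z => z ∘ (τ⁻¹ * σ)
  have T_iterate (k : ℕ) : T^[k] (x ∘ τ) = x ∘ τ ∘ ((τ⁻¹ * σ) ^ k : Equiv.Perm ι) := by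
    induction k with
    | zero => rfl
    | succ k ih => rw [Function.iterate_succ_apply', ih, pow_succ]; rfl
  have T_apply : T (x ∘ τ) = x ∘ σ := by ext; simp [T]
  have T_mono : Monotone T := fun _ _ hle i => hle _
  have iterates_antitone : Antitone fun k => T^[k] (x ∘ τ) :=
    T_mono.antitone_iterate_of_map_le (T_apply.trans_le h)
  have h_ge : T^[orderOf (τ⁻¹ * σ)] (x ∘ τ) ≤ T (x ∘ τ) :=
    iterates_antitone (orderOf_pos (τ⁻¹ * σ))
  rw [T_iterate, pow_orderOf_eq_one] at h_ge
  exact h.antisymm (h_ge.trans_eq T_apply)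

theorem exists_eq_and_ne_of_lt [Finite V] {x y : ι → V} (hxy : x < y) (hx : x.Surjective)
    (hy : y.Surjective) : ∃ i j, x i = x j ∧ y i ≠ y j := by
  by_contra! hfactor
  -- Now `y = φ ∘ x` for a permutation `φ` of `V` lying above the identity, hence equal to it.
  let φ : V → V := y ∘ Function.surjInv hx
  have hφ (i : ι) : φ (x i) = y i := hfactor _ _ (Function.surjInv_eq hx _)
  have φ_surjective : φ.Surjective := fun v => by
    obtain ⟨i, rfl⟩ := hy v
    exact ⟨x i, hφ i⟩
  let π := Equiv.ofBijective φ (Finite.surjective_iff_bijective.1 φ_surjective)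
  have id_le : id ∘ (1 : Equiv.Perm V) ≤ id ∘ π := by
    intro v
    obtain ⟨i, rfl⟩ := hx v
    exact (hxy.le i).trans_eq (hφ i).symm
  have φ_eq_id := comp_perm_eq_of_comp_perm_le id_le
  exact hxy.ne (funext fun i => (congrFun φ_eq_id (x i)).trans (hφ i))

theorem swap_index_unique [Finite ι] {g : (ι → V) → β} (hg : HasChainFibers g) {y : ι → V}
    {i j k : ι} (hj : y j ≠ y i) {τ : Equiv.Perm ι}
    (h : g (y ∘ ⇑(Equiv.swap i j * τ)) = g (y ∘ ⇑(Equiv.swap i k * τ))) : j = k := by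
  by_contra hjk
  have h_eq : y ∘ ⇑(Equiv.swap i j * τ) = y ∘ ⇑(Equiv.swap i k * τ) := by
    rcases hg _ _ h with hle | hle
    · exact comp_perm_eq_of_comp_perm_le hle
    · exact (comp_perm_eq_of_comp_perm_le hle).symm
  have hji : j ≠ i := fun hji => hj (congrArg y hji)
  have h_at := congrFun h_eq (τ⁻¹ j)
  simp only [Equiv.Perm.coe_mul, Equiv.Perm.coe_inv, Function.comp_apply, Equiv.apply_symm_apply,
    Equiv.swap_apply_right, Equiv.swap_apply_of_ne_of_ne hji hjk] at h_at
  exact hj h_at.symm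

variable [Fintype ι]

/- The map `(j, σ) ↦ swap i j * σ` is injective on the pairs counted: it fixes `x ∘ σ`, and distinct
rearrangements of `y` are incomparable, so the chain containing `x ∘ σ` determines `j`. -/
theorem card_mul_card_filter_perm_le {g : (ι → V) → β} (hg : HasChainFibers g) (x y : ι → V)
    (i : ι) :
    #{j | x j = x i ∧ y j ≠ y i} * #{σ : Equiv.Perm ι | g (x ∘ σ) = g (y ∘ σ)} ≤
      (Fintype.card ι).factorial := by
  rw [← card_product, ← Fintype.card_perm, ← card_univ]
  refine card_le_card_of_injOn (fun p => Equiv.swap i p.1 * p.2)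
    (fun _ _ => mem_coe.2 (mem_univ _)) ?_
  rintro ⟨j, σ⟩ hjσ ⟨k, τ⟩ hkτ (heq : Equiv.swap i j * σ = Equiv.swap i k * τ)
  simp only [coe_product, Set.mem_prod, mem_coe, mem_filter, mem_univ, true_and] at hjσ hkτ
  obtain ⟨⟨hxj, hyj⟩, hσ⟩ := hjσ
  obtain ⟨⟨hxk, -⟩, hτ⟩ := hkτ
  have hx : x ∘ σ = x ∘ τ := by
    conv_lhs => rw [← comp_swap_eq_self hxj]
    conv_rhs => rw [← comp_swap_eq_self hxk]
    exact congrArg (fun ρ : Equiv.Perm ι => x ∘ ρ) heq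
  have hjk : j = k := by
    refine swap_index_unique hg hyj (τ := Equiv.swap i j * σ) ?_
    conv_rhs => rw [heq]
    simp only [Equiv.swap_mul_self_mul]
    rw [← hσ, ← hτ, hx]
  subst hjk
  rw [mul_left_cancel heq]

theorem exists_le_card_filter_eq_and_ne [Finite V] {q : ℝ} (hq : 0 < q) {x y : ι → V}
    (hx : IsSpread q x) (hy : IsSpread q y) (hxy : x < y) :
    ∃ i, q / 2 ≤ #{j | x j = x i ∧ y j ≠ y i} := by
  obtain ⟨i, k, hxik, hyik⟩ := exists_eq_and_ne_of_lt hxy (hx.surjective hq) (hy.surjective hq)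
  have hcover : ({j | x j = x i} : Finset ι) ⊆
      ({j | x j = x i ∧ y j ≠ y i} : Finset ι) ∪
        ({j | x j = x k ∧ y j ≠ y k} : Finset ι) := by
    intro j
    simp only [mem_union, mem_filter, mem_univ, true_and]
    grind
  have hcard : q ≤ #{j | x j = x i ∧ y j ≠ y i} + #{j | x j = x k ∧ y j ≠ y k} :=
    (hx (x i)).trans (by exact_mod_cast (card_le_card hcover).trans (card_union_le _ _))
  by_contra! hsmall
  linarith [hsmall i, hsmall k]

theorem isSupersaturated_of_isSpread [Finite V] {g : (ι → V) → β} (hg : HasChainFibers g)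
    {M : Finset β} (hgM : ∀ x, g x ∈ M) {q : ℝ} (hq : 0 < q) {T : Finset (ι → V)}
    (hT : ∀ x ∈ T, IsSpread q x) : IsSupersaturated T #M (q / 2) := by
  intro F hF
  let SameChain (σ : Equiv.Perm ι) (p : (ι → V) × (ι → V)) : Prop := g (p.1 ∘ σ) = g (p.2 ∘ σ)
  have many_same_chain (σ : Equiv.Perm ι) : (#F : ℝ) - #M ≤ #{p ∈ ltPairs F | SameChain σ p} := by
    have hgσ : HasChainFibers (g ∘ fun x : ι → V => x ∘ σ) :=
      hg.comp fun x y hle i => by simpa using hle (σ.symm i)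
    rw [sub_le_iff_le_add']
    exact_mod_cast card_le_card_add_card_filter_ltPairs hgσ fun x _ => hgM (x ∘ σ)
  have rarely_same_chain :
      ∀ p ∈ ltPairs F, #{σ | SameChain σ p} * (q / 2) ≤ (Fintype.card ι).factorial := by
    intro p hp
    obtain ⟨hpF, hlt⟩ := mem_filter.1 hp
    obtain ⟨h₁, h₂⟩ := mem_product.1 hpF
    obtain ⟨i, hi⟩ := exists_le_card_filter_eq_and_ne hq (hT _ (hF h₁)) (hT _ (hF h₂)) hlt
    rw [mul_comm]
    refine (mul_le_mul_of_nonneg_right hi (Nat.cast_nonneg _)).trans ?_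
    exact_mod_cast card_mul_card_filter_perm_le hg p.1 p.2 i
  have double_count : ∑ σ, #{p ∈ ltPairs F | SameChain σ p} =
      ∑ p ∈ ltPairs F, #{σ | SameChain σ p} :=
    sum_card_bipartiteAbove_eq_sum_card_bipartiteBelow SameChain
  refine le_of_mul_le_mul_left ?_ (Nat.cast_pos.2 (Fintype.card ι).factorial_pos : (0 : ℝ) < _)
  calc ((Fintype.card ι).factorial : ℝ) * (((#F : ℝ) - #M) * (q / 2))
      = (∑ _σ : Equiv.Perm ι, ((#F : ℝ) - #M)) * (q / 2) := by
        rw [sum_const, card_univ, Fintype.card_perm, nsmul_eq_mul, mul_assoc]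
    _ ≤ (∑ σ, (#{p ∈ ltPairs F | SameChain σ p} : ℝ)) * (q / 2) := by
        gcongr with σ
        exact many_same_chain σ
    _ = ∑ p ∈ ltPairs F, #{σ | SameChain σ p} * (q / 2) := by
        rw [← sum_mul]
        exact_mod_cast congrArg (fun k : ℕ => (k : ℝ) * (q / 2)) double_count
    _ ≤ (Fintype.card ι).factorial * #(ltPairs F) := by
        rw [mul_comm, ← nsmul_eq_mul]
        exact sum_le_card_nsmul _ _ _ rarely_same_chain

end Supersaturation

section Concentration

theorem integral_uniformOn_univ {α : Type*} [Fintype α] [MeasurableSpace α]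
    [MeasurableSingletonClass α] (f : α → ℝ) :
    ∫ a, f a ∂(uniformOn Set.univ) = 𝔼 a, f a := by
  rw [integral_fintype .of_finite, Fintype.expect_eq_sum_div_card, sum_div]
  refine sum_congr rfl fun a _ => ?_
  simp [measureReal_def, uniformOn_univ, div_eq_inv_mul]

theorem measureReal_uniformOn_univ {α : Type*} [Fintype α] [MeasurableSpace α]
    [MeasurableSingletonClass α] (s : Finset α) :
    (uniformOn Set.univ).real (s : Set α) = #s / Fintype.card α := by
  simp [measureReal_def, uniformOn_univ]

variable {ι α : Type*} [Fintype ι] [Nonempty α]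

theorem variance_sum_uniformOn_univ_le [Finite α] [MeasurableSpace α]
    [DiscreteMeasurableSpace α] {f : α → ℝ} {a b : ℝ}
    (hf : ∀ v, f v ∈ Set.Icc a b) :
    Var[fun x : ι → α => ∑ i, f (x i); uniformOn Set.univ] ≤
      Fintype.card ι * ((b - a) / 2) ^ 2 := by
  have := isProbabilityMeasure_uniformOn Set.finite_univ (Set.univ_nonempty (α := α))
  have popoviciu : Var[f; uniformOn Set.univ] ≤ ((b - a) / 2) ^ 2 :=
    variance_le_sq_of_bounded (ae_of_all _ hf) Measurable.of_discrete.aemeasurable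
  rw [← Set.pi_univ Set.univ, uniformOn_pi, ← sum_fn, variance_sum_pi fun _ => .of_discrete]
  simpa using mul_le_mul_of_nonneg_left popoviciu (Nat.cast_nonneg (Fintype.card ι))

variable [Fintype α]

theorem integral_sum_uniformOn_univ [MeasurableSpace α] [DiscreteMeasurableSpace α] (f : α → ℝ) :
    ∫ x : ι → α, ∑ i, f (x i) ∂(uniformOn Set.univ) = Fintype.card ι * 𝔼 v, f v := by
  have := isProbabilityMeasure_uniformOn Set.finite_univ (Set.univ_nonempty (α := α))
  rw [← Set.pi_univ Set.univ, uniformOn_pi, integral_finsetSum _ fun i _ => .of_finite]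
  simp [integral_comp_eval, AEStronglyMeasurable.of_discrete, integral_uniformOn_univ]

theorem card_filter_le_abs_sum_sub_le [DecidableEq ι] {f : α → ℝ} {a b r : ℝ}
    (hf : ∀ v, f v ∈ Set.Icc a b) (hr : 0 < r) :
    (#{x : ι → α | r ≤ |∑ i, f (x i) - Fintype.card ι * 𝔼 v, f v|} : ℝ) ≤
      Fintype.card ι * ((b - a) / 2) ^ 2 / r ^ 2 * Fintype.card α ^ Fintype.card ι := by
  let _ : MeasurableSpace α := ⊤
  have := isProbabilityMeasure_uniformOn Set.finite_univ (Set.univ_nonempty (α := ι → α))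
  have chebyshev := ENNReal.toReal_le_of_le_ofReal
    (div_nonneg (variance_nonneg _ _) (sq_nonneg r)) <| meas_ge_le_variance_div_sq 
      (μ := uniformOn Set.univ) (X := fun x : ι → α => ∑ i, f (x i)) .of_discrete hr
  rw [← measureReal_def, ← coe_filter_univ, measureReal_uniformOn_univ, div_le_iff₀ (by positivity),
    integral_sum_uniformOn_univ] at chebyshev
  rw [Fintype.card_fun, Nat.cast_pow] at chebyshev
  refine chebyshev.trans ?_
  gcongr
  exact variance_sum_uniformOn_univ_le hf

end Concentration

section Atypical

variable {ι V : Type*} [Fintype ι] [DecidableEq ι] [Nonempty ι] [Fintype V]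

theorem card_filter_card_fiber_lt_le (v : V) :
    (#{x : ι → V | #{i | x i = v} < (Fintype.card ι / (2 * Fintype.card V) : ℝ)} : ℝ) ≤
      Fintype.card V ^ 2 / Fintype.card ι * Fintype.card V ^ Fintype.card ι := by
  have : Nonempty V := ⟨v⟩
  set D := (Fintype.card ι : ℝ)
  set n := (Fintype.card V : ℝ)
  have hD : 0 < D := Nat.cast_pos.2 Fintype.card_pos
  have hn : 0 < n := Nat.cast_pos.2 Fintype.card_pos
  let f (u : V) : ℝ := if u = v then 1 else 0
  have f_mem (u : V) : f u ∈ Set.Icc 0 1 := by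
    simp only [f]
    split_ifs <;> simp
  have sum_f (x : ι → V) : ∑ i, f (x i) = #{i | x i = v} := by simp [f]
  have expect_f : 𝔼 u, f u = 1 / n := by simp [f, n]
  calc (#{x : ι → V | #{i | x i = v} < D / (2 * n)} : ℝ)
      ≤ #{x : ι → V | D / (2 * n) ≤ |∑ i, f (x i) - D * 𝔼 u, f u|} := by
        refine Nat.cast_le.2 (card_le_card (monotone_filter_right _ fun x _ hx => ?_))
        rw [sum_f, expect_f, le_abs']
        left
        have : D * (1 / n) = D / (2 * n) + D / (2 * n) := by field_simp; norm_num
        linarith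
    _ ≤ D * ((1 - 0) / 2) ^ 2 / (D / (2 * n)) ^ 2 * n ^ Fintype.card ι :=
        card_filter_le_abs_sum_sub_le f_mem (by positivity)
    _ = n ^ 2 / D * n ^ Fintype.card ι := by field_simp; norm_num

theorem card_filter_not_isSpread_le :
    (#{x : ι → V | ¬IsSpread (Fintype.card ι / (2 * Fintype.card V)) x} : ℝ) ≤
      Fintype.card V ^ 3 / Fintype.card ι * Fintype.card V ^ Fintype.card ι := by
  set D := (Fintype.card ι : ℝ)
  set n := (Fintype.card V : ℝ)
  have hcover : ({x : ι → V | ¬IsSpread (D / (2 * n)) x} : Finset (ι → V)) ⊆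
      univ.biUnion fun v => {x : ι → V | #{i | x i = v} < D / (2 * n)} := by
    intro x
    simp [IsSpread]
  calc (#{x : ι → V | ¬IsSpread (D / (2 * n)) x} : ℝ)
      ≤ ∑ v, (#{x : ι → V | #{i | x i = v} < D / (2 * n)} : ℝ) := by
        exact_mod_cast (card_le_card hcover).trans card_biUnion_le
    _ ≤ ∑ _v : V, n ^ 2 / D * n ^ Fintype.card ι :=
        sum_le_sum fun v _ => card_filter_card_fiber_lt_le v
    _ = n ^ 3 / D * n ^ Fintype.card ι := by
        rw [sum_const, card_univ, nsmul_eq_mul]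
        ring

end Atypical

section Box

/-- The points of rank `r` in the box `Fin (m + 1) ^ D`. Coordinates start at `0`, so the middle
rank is `D * m / 2`. -/
noncomputable def boxLayer (D m r : ℕ) : Finset (Fin D → Fin (m + 1)) :=
  {x | ∑ i, (x i : ℕ) = r}

variable {D m : ℕ}

theorem mem_boxLayer {r : ℕ} {x : Fin D → Fin (m + 1)} :
    x ∈ boxLayer D m r ↔ ∑ i, (x i : ℕ) = r := by
  simp [boxLayer]

theorem exists_hasChainFibers_mem_boxLayer (D m : ℕ) :
    ∃ g : (Fin D → Fin (m + 1)) → Fin D → Fin (m + 1),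
      HasChainFibers g ∧ ∀ x, g x ∈ boxLayer D m (D * m / 2) := by
  obtain ⟨κ, chain, bot, h⟩ := exists_isSymmChainDecomp_pi_fin fun _ : Fin D => m
  obtain ⟨g, hg, hg_rank⟩ := h.exists_map_to_middle
  exact ⟨g, hg, fun x => mem_boxLayer.2 (by simpa using hg_rank x)⟩

theorem card_boxLayer_le_card_middle (r : ℕ) :
    #(boxLayer D m r) ≤ #(boxLayer D m (D * m / 2)) := by
  obtain ⟨g, hg, hg_middle⟩ := exists_hasChainFibers_mem_boxLayer D m
  refine card_le_card_of_injOn g (fun x _ => hg_middle x) fun x hx y hy hxy => ?_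
  exact hg.eq_of_strictMono strictMono_sum_val hxy
    ((mem_boxLayer.1 hx).trans (mem_boxLayer.1 hy).symm)

theorem card_Icc_ceil_floor_le {a b : ℝ} (hb : 0 ≤ b) (hab : a ≤ b) :
    (#(Icc ⌈a⌉₊ ⌊b⌋₊) : ℝ) ≤ b - a + 1 := by
  rw [Nat.card_Icc]
  rcases le_total (⌊b⌋₊ + 1) ⌈a⌉₊ with h | h
  · rw [Nat.sub_eq_zero_of_le h]
    push_cast
    linarith
  · push_cast [Nat.cast_sub h]
    linarith [Nat.floor_le hb, Nat.le_ceil a]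

theorem card_filter_abs_sum_sub_lt_le {c w : ℝ} (hc : 0 ≤ c) (hw : 0 ≤ w) :
    (#{x : Fin D → Fin (m + 1) | |(∑ i, (x i : ℝ)) - c| < w} : ℝ) ≤
      (2 * w + 1) * #(boxLayer D m (D * m / 2)) := by
  have card_le : #{x : Fin D → Fin (m + 1) | |(∑ i, (x i : ℝ)) - c| < w} ≤
      #(boxLayer D m (D * m / 2)) * #(Icc ⌈c - w⌉₊ ⌊c + w⌋₊) := by
    refine card_le_mul_card_image_of_maps_to (f := fun x => ∑ i, (x i : ℕ)) (fun x hx => ?_) _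
      fun r _ => (card_le_card fun x hx => ?_).trans (card_boxLayer_le_card_middle r)
    · obtain ⟨hlo, hhi⟩ := abs_lt.1 (mem_filter.1 hx).2
      rw [mem_Icc, Nat.ceil_le, Nat.le_floor_iff (by positivity)]
      push_cast
      constructor <;> linarith
    · exact mem_boxLayer.2 (mem_filter.1 hx).2
  calc (#{x : Fin D → Fin (m + 1) | |(∑ i, (x i : ℝ)) - c| < w} : ℝ)
      ≤ #(boxLayer D m (D * m / 2)) * #(Icc ⌈c - w⌉₊ ⌊c + w⌋₊) := by exact_mod_cast card_le
    _ ≤ #(boxLayer D m (D * m / 2)) * (c + w - (c - w) + 1) := by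
        gcongr
        exact card_Icc_ceil_floor_le (by positivity) (by linarith)
    _ = (2 * w + 1) * #(boxLayer D m (D * m / 2)) := by ring

theorem card_filter_mul_sqrt_le_abs_sum_sub_le (hD : 0 < D) :
    (#{x : Fin D → Fin (m + 1) |
        (m + 1 : ℕ) * √D ≤ |(∑ i, (x i : ℝ)) - D * 𝔼 v : Fin (m + 1), (v : ℝ)|} : ℝ) ≤
      (m + 1 : ℕ) ^ D / 4 := by
  have val_mem (v : Fin (m + 1)) : (v : ℝ) ∈ Set.Icc 0 ((m + 1 : ℕ) : ℝ) :=
    ⟨Nat.cast_nonneg _, Nat.cast_le.2 v.is_lt.le⟩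
  have chebyshev := card_filter_le_abs_sum_sub_le (ι := Fin D) val_mem
    (by positivity : 0 < (m + 1 : ℕ) * √(D : ℝ))
  simp only [Fintype.card_fin] at chebyshev
  refine chebyshev.trans_eq ?_
  rw [mul_pow, Real.sq_sqrt (Nat.cast_nonneg D)]
  field_simp
  norm_num

theorem pow_le_mul_sqrt_mul_card_middle (hD : 0 < D) :
    ((m + 1 : ℕ) : ℝ) ^ D ≤ 4 * (m + 1 : ℕ) * √D * #(boxLayer D m (D * m / 2)) := by
  set n := ((m + 1 : ℕ) : ℝ)
  set c : ℝ := D * 𝔼 v : Fin (m + 1), (v : ℝ)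
  have hn : 1 ≤ n := by simp [n]
  have hs : 1 ≤ √D := Real.one_le_sqrt.2 (by exact_mod_cast hD)
  have far : (#{x : Fin D → Fin (m + 1) | n * √D ≤ |(∑ i, (x i : ℝ)) - c|} : ℝ) ≤ n ^ D / 4 :=
    card_filter_mul_sqrt_le_abs_sum_sub_le hD
  have near : (#{x : Fin D → Fin (m + 1) | |(∑ i, (x i : ℝ)) - c| < n * √D} : ℝ) ≤
      3 * (n * √D) * #(boxLayer D m (D * m / 2)) := by
    refine (card_filter_abs_sum_sub_lt_le (by positivity) (by positivity)).trans ?_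
    gcongr
    linarith [one_le_mul_of_one_le_of_one_le hn hs]
  have total : (#{x : Fin D → Fin (m + 1) | |(∑ i, (x i : ℝ)) - c| < n * √D} : ℝ) +
      #{x : Fin D → Fin (m + 1) | n * √D ≤ |(∑ i, (x i : ℝ)) - c|} = n ^ D := by
    simp_rw [← not_lt]
    have := card_filter_add_card_filter_not (s := univ)
      fun x : Fin D → Fin (m + 1) => |(∑ i, (x i : ℝ)) - c| < n * √D
    rw [card_univ, Fintype.card_fun, Fintype.card_fin, Fintype.card_fin] at this
    simp only [n]
    exact_mod_cast this
  linarith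

end Box

section MainBound

variable {D m : ℕ}

theorem one_le_two_mul_log (hD : 2 ≤ D) : 1 ≤ 2 * Real.log D := by
  have : Real.log 2 ≤ Real.log D := Real.log_le_log two_pos (by exact_mod_cast hD)
  linarith [Real.log_two_gt_d9]

theorem one_div_sqrt_le (hD : 2 ≤ D) : 1 / √D ≤ 2 * (Real.log D / √D) := by
  rw [← mul_div_assoc]
  gcongr
  exact one_le_two_mul_log hD

theorem log_div_sqrt_le_two (D : ℕ) : Real.log D / √D ≤ 2 := by
  refine div_le_of_le_mul₀ (Real.sqrt_nonneg _) zero_le_two ?_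
  have := Real.log_le_self (Real.sqrt_nonneg D)
  rw [Real.log_sqrt (Nat.cast_nonneg D)] at this
  linarith

theorem exp_le_two_rpow {u : ℝ} (hu : 0 ≤ u) : Real.exp u ≤ 2 ^ (2 * u) := by
  rw [Real.rpow_def_of_pos two_pos]
  refine Real.exp_le_exp.2 ?_
  nlinarith [Real.log_two_gt_d9]

/-- The typical points of the box: those taking every value at least half as often as expected. -/
noncomputable def typicalPoints (D m : ℕ) : Finset (Fin D → Fin (m + 1)) :=
  {x | IsSpread (D / (2 * (m + 1 : ℕ))) x}

theorem isSupersaturated_typicalPoints (hD : 0 < D) :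
    IsSupersaturated (typicalPoints D m) #(boxLayer D m (D * m / 2)) (D / (4 * (m + 1 : ℕ))) := by
  obtain ⟨g, hg, hg_middle⟩ := exists_hasChainFibers_mem_boxLayer D m
  have h := isSupersaturated_of_isSpread hg hg_middle (T := typicalPoints D m)
    (q := D / (2 * (m + 1 : ℕ))) (by positivity) fun x hx => (mem_filter.1 hx).2
  convert h using 1
  ring

theorem card_sdiff_typicalPoints_le (hD : 0 < D) :
    (#(univ \ typicalPoints D m) : ℝ) ≤
      4 * (m + 1 : ℕ) ^ 4 / √D * #(boxLayer D m (D * m / 2)) := by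
  have : Nonempty (Fin D) := ⟨⟨0, hD⟩⟩
  have atypical := card_filter_not_isSpread_le (ι := Fin D) (V := Fin (m + 1))
  simp only [Fintype.card_fin] at atypical
  rw [typicalPoints, ← compl_eq_univ_sdiff, compl_filter]
  refine atypical.trans ?_
  calc ((m + 1 : ℕ) : ℝ) ^ 3 / D * (m + 1 : ℕ) ^ D
      ≤ (m + 1 : ℕ) ^ 3 / (√D) ^ 2 * (4 * (m + 1 : ℕ) * √D * #(boxLayer D m (D * m / 2))) := by
        rw [Real.sq_sqrt (Nat.cast_nonneg D)]
        gcongr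
        exact pow_le_mul_sqrt_mul_card_middle hD
    _ = 4 * (m + 1 : ℕ) ^ 4 / √D * #(boxLayer D m (D * m / 2)) := by
        have : √(D : ℝ) ≠ 0 := by positivity
        field_simp

theorem antichainCount_typicalPoints_le_exp (m : ℕ) (hD : 2 ≤ D) :
    antichainCount (typicalPoints D m) ≤
      2 ^ ((1 + Real.log D / √D) * #(boxLayer D m (D * m / 2))) *
        Real.exp (12 * (m + 1 : ℕ) / √D * (2 * #(boxLayer D m (D * m / 2)))) *
        Real.exp (8 * (m + 1 : ℕ) * Real.log D / D * #(typicalPoints D m)) := by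
  set n := ((m + 1 : ℕ) : ℝ)
  set L := Real.log D
  set s := √(D : ℝ)
  have hn : 1 ≤ n := by simp [n]
  have hD₀ : (0 : ℝ) < D := by positivity
  have hs : 1 ≤ s := Real.one_le_sqrt.2 (by exact_mod_cast one_le_two.trans hD)
  have hs_sq : s ^ 2 = D := Real.sq_sqrt hD₀.le
  have hL : 1 ≤ 2 * L := one_le_two_mul_log hD
  have exp_neg_L : Real.exp (-L) = 1 / D := by rw [Real.exp_neg, Real.exp_log hD₀, one_div]
  have hδ : 0 ≤ L / s := div_nonneg (by linarith) (by linarith)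
  refine (isSupersaturated_typicalPoints (by omega)).antichainCount_le_two_rpow
    (by positivity) hδ ?_ ?_
  · calc Real.exp (-(8 * n * L / D * (D / (4 * n) / 2))) = 1 / D := by
          rw [← exp_neg_L]
          congr 2
          field_simp
          ring
      _ ≤ 8 * n * L / D := by
          gcongr
          nlinarith
  · have exponent_ge : L ≤ 12 * n / s * (L / s / (1 + L / s) * (D / (4 * n))) := by
      calc L = 12 * n / s * (L / s / (1 + 2) * (D / (4 * n))) := by
            rw [← hs_sq]
            field_simp
            ring
        _ ≤ 12 * n / s * (L / s / (1 + L / s) * (D / (4 * n))) := by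
            gcongr
            exact log_div_sqrt_le_two D
    calc Real.exp (-(12 * n / s * (L / s / (1 + L / s) * (D / (4 * n))))) ≤ Real.exp (-L) := by
          gcongr
      _ = 1 / s ^ 2 := by rw [exp_neg_L, hs_sq]
      _ ≤ 12 * n / s := by
          rw [div_le_div_iff₀ (by positivity) (by positivity)]
          nlinarith

theorem antichainCount_typicalPoints_le_two_rpow (m : ℕ) (hD : 2 ≤ D) :
    antichainCount (typicalPoints D m) ≤
      (2 : ℝ) ^ ((1 + (1 + 64 * (m + 1 : ℕ) ^ 2) * (Real.log D / √D) +
        48 * (m + 1 : ℕ) * (1 / √D)) * #(boxLayer D m (D * m / 2))) := by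
  refine (antichainCount_typicalPoints_le_exp m hD).trans ?_
  set N := (#(boxLayer D m (D * m / 2)) : ℝ)
  set n := ((m + 1 : ℕ) : ℝ)
  set L := Real.log D
  have hL : 0 ≤ L := Real.log_natCast_nonneg D
  have card_typical : (#(typicalPoints D m) : ℝ) ≤ 4 * n * √D * N := by
    have := card_le_univ (typicalPoints D m)
    rw [Fintype.card_fun, Fintype.card_fin, Fintype.card_fin] at this
    exact le_trans (by exact_mod_cast this) (pow_le_mul_sqrt_mul_card_middle (by omega))
  have coarse_exponent : 8 * n * L / D * #(typicalPoints D m) ≤ 32 * n ^ 2 * (L / √D) * N := by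
    calc 8 * n * L / D * #(typicalPoints D m) ≤ 8 * n * L / (√D) ^ 2 * (4 * n * √D * N) := by
          rw [Real.sq_sqrt (Nat.cast_nonneg D)]
          gcongr
      _ = 32 * n ^ 2 * (L / √D) * N := by
          have : √(D : ℝ) ≠ 0 := by positivity
          field_simp
          ring
  calc 2 ^ ((1 + L / √D) * N) * Real.exp (12 * n / √D * (2 * N)) *
        Real.exp (8 * n * L / D * #(typicalPoints D m))
      ≤ 2 ^ ((1 + L / √D) * N) * 2 ^ (2 * (12 * n / √D * (2 * N))) *
        2 ^ (2 * (32 * n ^ 2 * (L / √D) * N)) := by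
        gcongr
        · exact exp_le_two_rpow (by positivity)
        · exact (Real.exp_le_exp.2 coarse_exponent).trans (exp_le_two_rpow (by positivity))
    _ = 2 ^ ((1 + (1 + 64 * n ^ 2) * (L / √D) + 48 * n * (1 / √D)) * N) := by
        rw [← Real.rpow_add two_pos, ← Real.rpow_add two_pos]
        ring_nf

theorem antichainCount_univ_le (m : ℕ) (hD : 2 ≤ D) :
    antichainCount (univ : Finset (Fin D → Fin (m + 1))) ≤
      (2 : ℝ) ^ ((1 + (1 + 96 * (m + 1 : ℕ) + 64 * (m + 1 : ℕ) ^ 2 + 8 * (m + 1 : ℕ) ^ 4) *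
        Real.log D / √D) * #(boxLayer D m (D * m / 2))) := by
  have typical := antichainCount_typicalPoints_le_two_rpow m hD
  have atypical := card_sdiff_typicalPoints_le (D := D) (m := m) (by omega)
  set N := (#(boxLayer D m (D * m / 2)) : ℝ)
  set n := ((m + 1 : ℕ) : ℝ)
  set L := Real.log D
  calc (antichainCount univ : ℝ)
      ≤ 2 ^ #(univ \ typicalPoints D m) * antichainCount (typicalPoints D m) := by
        exact_mod_cast antichainCount_le_two_pow_mul univ (typicalPoints D m)
    _ ≤ 2 ^ (4 * n ^ 4 / √D * N) *
        2 ^ ((1 + (1 + 64 * n ^ 2) * (L / √D) + 48 * n * (1 / √D)) * N) := by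
        rw [← Real.rpow_natCast]
        gcongr
        exact one_le_two
    _ = 2 ^ ((1 + (1 + 64 * n ^ 2) * (L / √D) + (48 * n + 4 * n ^ 4) * (1 / √D)) * N) := by
        rw [← Real.rpow_add two_pos]
        ring_nf
    _ ≤ 2 ^ ((1 + (1 + 64 * n ^ 2) * (L / √D) +
          (48 * n + 4 * n ^ 4) * (2 * (L / √D))) * N) := by
        gcongr
        · exact one_le_two
        · exact one_div_sqrt_le hD
    _ = 2 ^ ((1 + (1 + 96 * n + 64 * n ^ 2 + 8 * n ^ 4) * L / √D) * N) := by ring_nf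

end MainBound

/-- Theorem 2: for every `n ≥ 2` there is a constant `C_n > 0` such that for every
`D ≥ 2`, the number of antichains in the box `{1,...,n}^D` (modelled as `Fin D → Fin n`,
with `x i` standing for the value `x i + 1 ∈ {1,...,n}`, carrying the product order) is
at most `2^{(1 + C_n·(log D)/√D)·N_{D,n}}`, where `N_{D,n}` is the size of the middle
layer `{x : Σ (x i + 1) = ⌊D(n+1)/2⌋}`. -/
theorem stmt_18 (n : ℕ) (hn : 2 ≤ n) :
    ∃ C : ℝ, 0 < C ∧ ∀ D : ℕ, 2 ≤ D →
      (Nat.card {A : Finset (Fin D → Fin n) //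
          IsAntichain (· ≤ ·) (A : Set (Fin D → Fin n))} : ℝ) ≤
        2 ^ ((1 + C * Real.log D / Real.sqrt D) *
          ((Finset.univ.filter
            (fun x : Fin D → Fin n => ∑ i, ((x i : ℕ) + 1) = D * (n + 1) / 2)).card : ℝ)) := by
  obtain ⟨m, rfl⟩ : ∃ m, n = m + 1 := ⟨n - 1, by omega⟩
  refine ⟨1 + 96 * (m + 1 : ℕ) + 64 * (m + 1 : ℕ) ^ 2 + 8 * (m + 1 : ℕ) ^ 4, by positivity,
    fun D hD => ?_⟩
  have middle_layer : (univ.filter fun x : Fin D → Fin (m + 1) =>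
      ∑ i, ((x i : ℕ) + 1) = D * (m + 1 + 1) / 2) = boxLayer D m (D * m / 2) := by
    have : D * (m + 1 + 1) = D * m + 2 * D := by ring
    ext x
    simp only [mem_filter, mem_univ, true_and, mem_boxLayer, sum_add_distrib, sum_const, card_univ,
      Fintype.card_fin, smul_eq_mul, mul_one]
    omega
  have card_antichains : Nat.card {A : Finset (Fin D → Fin (m + 1)) //
      IsAntichain (· ≤ ·) (A : Set (Fin D → Fin (m + 1)))} =
      antichainCount (univ : Finset (Fin D → Fin (m + 1))) := by
    rw [Nat.card_eq_fintype_card, Fintype.card_subtype, antichainCount, powerset_univ]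
  rw [middle_layer, card_antichains]
  exact antichainCount_univ_le m hD
end
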